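/- arXiv:1108.3585 — 4 statements merged into one kernel-verified Lean document; each statement's English description precedes it below -/
import Mathlib

section
/- Let α₁, α₂, λ > 0 and let X₁ and X₂ be independent random variables with X₁ gamma-distributed with shape α₁ and scale λ and X₂ gamma-distributed with shape α₂ and scale λ. Then the random variable Z = S²/X̄² = (X₁ − X₂)²/(X₁ + X₂)² has density (with respect to Lebesgue measure on (0,1)) h(z; α₁, α₂) = (1/B(α₁,α₂)) · 2^{−(α₁+α₂)} · z^{−1/2} · [ (1 − √z)^{α₁−1}(1 + √z)^{α₂−1} + (1 + √z)^{α₁−1}(1 − √z)^{α₂−1} ], 0 < z < 1, where B denotes the Beta function. -/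
/-!
The ratio `W = X₁ / (X₁ + X₂)` and the sum `S = X₁ + X₂` are independent, `W` being beta-distributed
with parameters `α₁`, `α₂` and `S` gamma-distributed with shape `α₁ + α₂`: in the coordinates
`(W, S)` the product of the two gamma densities, multiplied by the Jacobian `|s|`, factors.
As `S ≠ 0` almost surely, `Z = (2 W - 1) ^ 2`. So `Z` is the square of an affine image of a
beta variable, and the two square roots `±√z` give the two summands of its density.
-/

open MeasureTheory ProbabilityTheory

section ChangeOfVariables

open Set
open scoped ENNReal

lemma lintegral_eq_mul_lintegral_comp_affine {a : ℝ} (ha : a ≠ 0) (b : ℝ) (g : ℝ → ℝ≥0∞) :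
    ∫⁻ y, g y = ENNReal.ofReal |a| * ∫⁻ x, g (a * x + b) := by
  have hderiv (x : ℝ) : HasDerivAt (fun x => a * x + b) a x := by
    simpa using ((hasDerivAt_id x).const_mul a).add_const b
  have hinj : Function.Injective fun x => a * x + b :=
    (add_left_injective b).comp (mul_right_injective₀ ha)
  have himage : (fun x => a * x + b) '' univ = univ := by
    refine image_univ_of_surjective fun y => ⟨(y - b) / a, ?_⟩
    field_simp
    ring
  have h := lintegral_image_eq_lintegral_abs_deriv_mul .univ
    (fun x _ => (hderiv x).hasDerivWithinAt) hinj.injOn g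
  rwa [himage, setLIntegral_univ, setLIntegral_univ,
    lintegral_const_mul' _ _ ENNReal.ofReal_ne_top] at h

lemma map_affine_withDensity {a : ℝ} (ha : a ≠ 0) (b : ℝ) {f : ℝ → ℝ≥0∞} (hf : Measurable f) :
    ((volume : Measure ℝ).withDensity f).map (fun x => a * x + b) =
      volume.withDensity fun y => ENNReal.ofReal |a⁻¹| * f (a⁻¹ * (y - b)) := by
  refine Measure.ext_of_lintegral _ fun φ hφ => ?_
  have hcancel : ENNReal.ofReal |a| * ENNReal.ofReal |a⁻¹| = 1 := by
    rw [← ENNReal.ofReal_mul (abs_nonneg a), ← abs_mul, mul_inv_cancel₀ ha, abs_one,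
      ENNReal.ofReal_one]
  rw [lintegral_map hφ (by fun_prop), lintegral_withDensity_eq_lintegral_mul _ hf (by fun_prop),
    lintegral_withDensity_eq_lintegral_mul _ (by fun_prop) hφ,
    lintegral_eq_mul_lintegral_comp_affine ha b (_ * φ),
    ← lintegral_const_mul' _ _ ENNReal.ofReal_ne_top]
  refine lintegral_congr fun x => ?_
  simp only [Pi.mul_apply, add_sub_cancel_right, inv_mul_cancel_left₀ ha]
  rw [← mul_assoc, ← mul_assoc, hcancel, one_mul]

lemma lintegral_eq_lintegral_Ioi_add_comp_neg {g : ℝ → ℝ≥0∞} (hg : Measurable g) :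
    ∫⁻ t, g t = ∫⁻ t in Ioi 0, (g t + g (-t)) := by
  have hneg : ∫⁻ t in Iio 0, g t = ∫⁻ t in Ioi 0, g (-t) := by
    have h := (Measure.measurePreserving_neg volume).setLIntegral_comp_emb
      (MeasurableEquiv.neg ℝ).measurableEmbedding g (Ioi 0)
    rwa [image_neg_eq_neg, neg_Ioi, neg_zero, eq_comm] at h
  rw [lintegral_add_left hg, ← hneg, setLIntegral_congr Iio_ae_eq_Iic, ← compl_Ioi,
    lintegral_add_compl _ measurableSet_Ioi]

lemma lintegral_Ioi_eq_lintegral_comp_sqrt (g : ℝ → ℝ≥0∞) :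
    ∫⁻ t in Ioi 0, g t = ∫⁻ z in Ioi 0, ENNReal.ofReal (1 / (2 * √z)) * g √z := by
  have hderiv : ∀ z ∈ Ioi (0 : ℝ), HasDerivWithinAt (√·) (1 / (2 * √z)) (Ioi 0) z :=
    fun z hz => (Real.hasDerivAt_sqrt hz.ne').hasDerivWithinAt
  have hinj : InjOn (√·) (Ioi (0 : ℝ)) := fun z hz w hw =>
    (Real.sqrt_inj (le_of_lt hz) (le_of_lt hw)).1
  have himage : (√·) '' Ioi (0 : ℝ) = Ioi 0 :=
    Subset.antisymm (image_subset_iff.2 fun _ => Real.sqrt_pos.2)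
      fun t (ht : 0 < t) => ⟨t ^ 2, mem_Ioi.2 (pow_pos ht 2), Real.sqrt_sq ht.le⟩
  conv_lhs => rw [← himage]
  rw [lintegral_image_eq_lintegral_abs_deriv_mul measurableSet_Ioi hderiv hinj]
  simp only [abs_of_nonneg, one_div_nonneg, mul_nonneg, zero_le_two, Real.sqrt_nonneg]

lemma map_sq_withDensity {f : ℝ → ℝ≥0∞} (hf : Measurable f) :
    ((volume : Measure ℝ).withDensity f).map (· ^ 2) =
      (volume.restrict (Ioi 0)).withDensity fun z =>
        ENNReal.ofReal (1 / (2 * √z)) * (f √z + f (-√z)) := by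
  refine Measure.ext_of_lintegral _ fun φ hφ => ?_
  rw [lintegral_map hφ (by fun_prop), lintegral_withDensity_eq_lintegral_mul _ hf (by fun_prop),
    lintegral_withDensity_eq_lintegral_mul _ (by fun_prop) hφ,
    lintegral_eq_lintegral_Ioi_add_comp_neg (by fun_prop), lintegral_Ioi_eq_lintegral_comp_sqrt]
  refine setLIntegral_congr_fun measurableSet_Ioi fun z hz => ?_
  simp only [Pi.mul_apply, neg_sq, Real.sq_sqrt (le_of_lt hz)]
  ring

lemma map_sq_withDensity_restrict_Ioo {f : ℝ → ℝ≥0∞} (hf : Measurable f) {R : ℝ} (hR : 0 ≤ R) :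
    ((volume.restrict (Ioo (-R) R)).withDensity f).map (· ^ 2) =
      (volume.restrict (Ioo 0 (R ^ 2))).withDensity fun z =>
        ENNReal.ofReal (1 / (2 * √z)) * (f √z + f (-√z)) := by
  have hpreimage : (· ^ 2) ⁻¹' Iio (R ^ 2) = Ioo (-R) R := by
    ext t
    rw [mem_preimage, mem_Iio, sq_lt_sq, abs_of_nonneg hR, abs_lt, mem_Ioo]
  rw [← restrict_withDensity measurableSet_Ioo, ← hpreimage,
    ← Measure.restrict_map (by fun_prop) measurableSet_Iio, map_sq_withDensity hf,
    restrict_withDensity measurableSet_Iio, Measure.restrict_restrict measurableSet_Iio,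
    Iio_inter_Ioi]

lemma map_div_add_prodMk_add_withDensity {h : ℝ × ℝ → ℝ≥0∞} (hh : Measurable h) :
    ((volume : Measure (ℝ × ℝ)).withDensity h).map (fun p => (p.1 / (p.1 + p.2), p.1 + p.2)) =
      volume.withDensity fun q =>
        ENNReal.ofReal |q.2| * h (q.2 * q.1, q.2 * (1 - q.1)) := by
  refine Measure.ext_of_lintegral _ fun φ hφ => ?_
  rw [lintegral_map hφ (by fun_prop), lintegral_withDensity_eq_lintegral_mul _ hh (by fun_prop),
    lintegral_withDensity_eq_lintegral_mul _ (by fun_prop) hφ]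
  simp only [Pi.mul_apply, Measure.volume_eq_prod]
  calc ∫⁻ p : ℝ × ℝ, h p * φ (p.1 / (p.1 + p.2), p.1 + p.2) ∂volume.prod volume
      = ∫⁻ x, ∫⁻ y, h (x, y) * φ (x / (x + y), x + y) :=
        lintegral_prod _ (by fun_prop)
    _ = ∫⁻ x, ∫⁻ s, h (x, s - x) * φ (x / s, s) := by
        refine lintegral_congr fun x => ?_
        rw [← lintegral_sub_right_eq_self (fun y => h (x, y) * φ (x / (x + y), x + y)) x]
        simp only [add_sub_cancel]
    _ = ∫⁻ s, ∫⁻ x, h (x, s - x) * φ (x / s, s) :=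
        lintegral_lintegral_swap (Measurable.aemeasurable (by fun_prop))
    _ = ∫⁻ s, ∫⁻ u, ENNReal.ofReal |s| * h (s * u, s * (1 - u)) * φ (u, s) := by
        refine lintegral_congr_ae ?_
        filter_upwards [Measure.ae_ne volume 0] with s hs
        rw [lintegral_eq_mul_lintegral_comp_affine hs 0,
          ← lintegral_const_mul' _ _ ENNReal.ofReal_ne_top]
        simp only [add_zero, mul_div_cancel_left₀ _ hs, mul_one_sub, mul_assoc]
    _ = _ := by rw [lintegral_prod_symm' _ (by fun_prop)]

end ChangeOfVariables

section GammaBeta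

open Set

@[fun_prop]
lemma measurable_gammaPDF (a r : ℝ) : Measurable (gammaPDF a r) :=
  (measurable_gammaPDFReal a r).ennreal_ofReal

@[fun_prop]
lemma measurable_betaPDF (a b : ℝ) : Measurable (betaPDF a b) :=
  (measurable_betaPDFReal a b).ennreal_ofReal

lemma mul_gammaPDFReal_mul_gammaPDFReal {a b r s u : ℝ} (ha : 0 < a) (hb : 0 < b) (hr : 0 < r)
    (hs : 0 < s) (hu₀ : 0 < u) (hu₁ : u < 1) :
    s * (gammaPDFReal a r (s * u) * gammaPDFReal b r (s * (1 - u))) =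
      betaPDFReal a b u * gammaPDFReal (a + b) r s := by
  have hu' : 0 < 1 - u := sub_pos.2 hu₁
  have hΓ : Real.Gamma (a + b) ≠ 0 := (Real.Gamma_pos_of_pos (add_pos ha hb)).ne'
  have hexp : Real.exp (-(r * (s * u))) * Real.exp (-(r * (s * (1 - u)))) =
      Real.exp (-(r * s)) := by
    rw [← Real.exp_add]
    ring_nf
  have hpow : s * (s ^ (a - 1) * s ^ (b - 1)) = s ^ (a + b - 1) := by
    rw [← Real.rpow_add hs, mul_comm, ← Real.rpow_add_one hs.ne']
    ring_nf
  simp only [gammaPDFReal, betaPDFReal, beta, if_pos (mul_pos hs hu₀).le,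
    if_pos (mul_pos hs hu').le, if_pos hs.le, if_pos (And.intro hu₀ hu₁)]
  rw [Real.mul_rpow hs.le hu₀.le, Real.mul_rpow hs.le hu'.le, Real.rpow_add hr, ← hexp, ← hpow]
  field_simp

/-- Only an identity off null sets: the gamma density of shape `1` takes the value `r` at `0`
(as `0 ^ 0 = 1`), whereas `betaPDFReal` vanishes at `0` and `1`. -/
lemma abs_mul_gammaPDFReal_mul_gammaPDFReal {a b r s u : ℝ} (ha : 0 < a) (hb : 0 < b) (hr : 0 < r)
    (hs : s ≠ 0) (hu₀ : u ≠ 0) (hu₁ : u ≠ 1) :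
    |s| * (gammaPDFReal a r (s * u) * gammaPDFReal b r (s * (1 - u))) =
      betaPDFReal a b u * gammaPDFReal (a + b) r s := by
  have hgamma {c x : ℝ} (hx : x < 0) : gammaPDFReal c r x = 0 := if_neg hx.not_ge
  rcases hs.lt_or_gt with hs | hs
  · rw [hgamma hs, mul_zero]
    rcases hu₀.lt_or_gt with hu | hu
    · rw [hgamma (mul_neg_of_neg_of_pos hs (by linarith : 0 < 1 - u)), mul_zero, mul_zero]
    · rw [hgamma (mul_neg_of_neg_of_pos hs hu), zero_mul, mul_zero]
  rw [abs_of_pos hs]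
  rcases hu₀.lt_or_gt with hu | hu
  · rw [hgamma (mul_neg_of_pos_of_neg hs hu), betaPDFReal, if_neg fun h => hu.not_gt h.1]
    simp only [zero_mul, mul_zero]
  rcases hu₁.lt_or_gt with hu' | hu'
  · exact mul_gammaPDFReal_mul_gammaPDFReal ha hb hr hs hu hu'
  · rw [hgamma (mul_neg_of_pos_of_neg hs (sub_neg.2 hu')), betaPDFReal,
      if_neg fun h => hu'.not_gt h.2]
    simp only [zero_mul, mul_zero]

lemma measurePreserving_div_add_prodMk_add_gammaMeasure {a b r : ℝ} (ha : 0 < a) (hb : 0 < b)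
    (hr : 0 < r) :
    MeasurePreserving (fun p : ℝ × ℝ => (p.1 / (p.1 + p.2), p.1 + p.2))
      ((gammaMeasure a r).prod (gammaMeasure b r))
      ((betaMeasure a b).prod (gammaMeasure (a + b) r)) := by
  refine ⟨by fun_prop, ?_⟩
  simp only [gammaMeasure, betaMeasure]
  rw [prod_withDensity (by fun_prop) (by fun_prop), prod_withDensity (by fun_prop) (by fun_prop),
    ← Measure.volume_eq_prod, map_div_add_prodMk_add_withDensity (by fun_prop)]
  refine withDensity_congr_ae ?_
  have hfst (c : ℝ) : ∀ᵐ q : ℝ × ℝ, q.1 ≠ c :=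
    Measure.quasiMeasurePreserving_fst.ae (Measure.ae_ne volume c)
  have hsnd : ∀ᵐ q : ℝ × ℝ, q.2 ≠ 0 :=
    Measure.quasiMeasurePreserving_snd.ae (Measure.ae_ne volume 0)
  filter_upwards [hfst 0, hfst 1, hsnd] with q hu₀ hu₁ hs
  simp only [gammaPDF, betaPDF]
  rw [← ENNReal.ofReal_mul (gammaPDFReal_nonneg ha hr _), ← ENNReal.ofReal_mul (abs_nonneg _),
    abs_mul_gammaPDFReal_mul_gammaPDFReal ha hb hr hs hu₀ hu₁,
    ENNReal.ofReal_mul' (gammaPDFReal_nonneg (add_pos ha hb) hr _)]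

lemma map_two_mul_sub_one_betaMeasure (a b : ℝ) :
    (betaMeasure a b).map (fun w => 2 * w - 1) =
      (volume.restrict (Ioo (-1) 1)).withDensity fun t =>
        ENNReal.ofReal
          (1 / beta a b * 2 ^ (1 - (a + b)) * ((1 + t) ^ (a - 1) * (1 - t) ^ (b - 1))) := by
  rw [← withDensity_indicator measurableSet_Ioo]
  simp only [sub_eq_add_neg (2 * (_ : ℝ))]
  rw [betaMeasure, map_affine_withDensity two_ne_zero _ (by fun_prop)]
  congr 1
  funext t
  have hw : 2⁻¹ * (t - -1) = (1 + t) / 2 := by ring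
  have hw' : 1 - (1 + t) / 2 = (1 - t) / 2 := by ring
  rw [hw]
  by_cases ht : t ∈ Ioo (-1) 1
  · have hp : 0 < 1 + t := by linarith [ht.1]
    have hm : 0 < 1 - t := by linarith [ht.2]
    have htwo : (2 : ℝ) ^ (1 - (a + b)) = 2⁻¹ / (2 ^ (a - 1) * 2 ^ (b - 1)) := by
      rw [← Real.rpow_add two_pos, ← Real.rpow_neg_one, ← Real.rpow_sub two_pos]
      ring_nf
    rw [indicator_of_mem ht, betaPDF_of_pos_lt_one (by linarith) (by linarith), hw',
      ← ENNReal.ofReal_mul (abs_nonneg _), abs_of_pos (by norm_num : (0 : ℝ) < 2⁻¹),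
      Real.div_rpow hp.le two_pos.le, Real.div_rpow hm.le two_pos.le, htwo]
    ring_nf
  · rw [indicator_of_notMem ht]
    rcases not_and_or.1 ht with ht | ht
    · rw [betaPDF_eq_zero_of_nonpos (by linarith), mul_zero]
    · rw [betaPDF_eq_zero_of_one_le (by linarith), mul_zero]

lemma map_two_mul_sub_one_sq_betaMeasure {a b : ℝ} (ha : 0 < a) (hb : 0 < b) :
    (betaMeasure a b).map (fun w => (2 * w - 1) ^ 2) =
      (volume.restrict (Ioo 0 1)).withDensity fun z =>
        ENNReal.ofReal (1 / beta a b * 2 ^ (-(a + b)) * z ^ (-(1 / 2) : ℝ) *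
          ((1 - √z) ^ (a - 1) * (1 + √z) ^ (b - 1) + (1 + √z) ^ (a - 1) * (1 - √z) ^ (b - 1))) := by
  have hB := beta_pos ha hb
  change (betaMeasure a b).map ((· ^ 2) ∘ fun w => 2 * w - 1) = _
  rw [← Measure.map_map (by fun_prop) (by fun_prop), map_two_mul_sub_one_betaMeasure,
    map_sq_withDensity_restrict_Ioo (by fun_prop) zero_le_one, one_pow]
  refine withDensity_congr_ae (ae_restrict_of_forall_mem measurableSet_Ioo fun z hz => ?_)
  have hm : 0 < 1 - √z := sub_pos.2 ((Real.sqrt_lt' one_pos).2 (by simpa using hz.2))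
  have htwo : (2 : ℝ) ^ (1 - (a + b)) = 2 * 2 ^ (-(a + b)) := by
    rw [sub_eq_add_neg, Real.rpow_add two_pos, Real.rpow_one]
  have hz' : z ^ (-(1 / 2) : ℝ) = 1 / √z := by
    rw [Real.rpow_neg hz.1.le, ← Real.sqrt_eq_rpow, one_div]
  simp only [← sub_eq_add_neg, sub_neg_eq_add]
  rw [← ENNReal.ofReal_add (by positivity) (by positivity),
    ← ENNReal.ofReal_mul (by positivity), htwo, hz']
  ring_nf

end GammaBeta

/-- If `X₁ ~ Γ(α₁, λ)` and `X₂ ~ Γ(α₂, λ)` are independent, then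
`Z = (X₁ - X₂)² / (X₁ + X₂)²` has density
`h(z) = (1/B(α₁,α₂)) 2^{-(α₁+α₂)} z^{-1/2} [(1-√z)^{α₁-1}(1+√z)^{α₂-1} +
(1+√z)^{α₁-1}(1-√z)^{α₂-1}]` with respect to Lebesgue measure on `(0,1)`. -/
theorem density_of_S2_div_mean_sq
    {Ω : Type*} [MeasureSpace Ω] [IsProbabilityMeasure (ℙ : Measure Ω)]
    (α₁ α₂ lam : ℝ) (hα₁ : 0 < α₁) (hα₂ : 0 < α₂) (hlam : 0 < lam)
    (X₁ X₂ : Ω → ℝ) (hX₁m : Measurable X₁) (hX₂m : Measurable X₂)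
    (hindep : IndepFun X₁ X₂ ℙ)
    (hX₁ : Measure.map X₁ ℙ = gammaMeasure α₁ (1 / lam))
    (hX₂ : Measure.map X₂ ℙ = gammaMeasure α₂ (1 / lam)) :
    Measure.map (fun ω => (X₁ ω - X₂ ω) ^ 2 / (X₁ ω + X₂ ω) ^ 2) ℙ =
      ((volume : Measure ℝ).restrict (Set.Ioo 0 1)).withDensity (fun z =>
        ENNReal.ofReal
          ((1 / (Real.Gamma α₁ * Real.Gamma α₂ / Real.Gamma (α₁ + α₂))) *
            (2 : ℝ) ^ (-(α₁ + α₂)) * z ^ (-(1 / 2) : ℝ) *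
            ((1 - Real.sqrt z) ^ (α₁ - 1) * (1 + Real.sqrt z) ^ (α₂ - 1) +
              (1 + Real.sqrt z) ^ (α₁ - 1) * (1 - Real.sqrt z) ^ (α₂ - 1)))) := by
  have hlaw₁ : HasLaw X₁ (gammaMeasure α₁ (1 / lam)) := ⟨hX₁m.aemeasurable, hX₁⟩
  have hlaw₂ : HasLaw X₂ (gammaMeasure α₂ (1 / lam)) := ⟨hX₂m.aemeasurable, hX₂⟩
  have hr : 0 < 1 / lam := one_div_pos.2 hlam
  have := isProbabilityMeasureBeta hα₁ hα₂
  have := isProbabilityMeasure_gammaMeasure (add_pos hα₁ hα₂) hr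
  have hWS := (measurePreserving_div_add_prodMk_add_gammaMeasure hα₁ hα₂ hr).fun_comp_hasLaw
    ((indepFun_iff_hasLaw_prodMk_prod hlaw₁ hlaw₂).1 hindep)
  have hW : HasLaw (fun ω => X₁ ω / (X₁ ω + X₂ ω)) (betaMeasure α₁ α₂) :=
    measurePreserving_fst.fun_comp_hasLaw hWS
  have hS : HasLaw (fun ω => X₁ ω + X₂ ω) (gammaMeasure (α₁ + α₂) (1 / lam)) :=
    measurePreserving_snd.fun_comp_hasLaw hWS
  have hS₀ : ∀ᵐ ω, X₁ ω + X₂ ω ≠ 0 :=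
    (hS.ae_iff (p := (· ≠ 0)) (by fun_prop)).2
      ((withDensity_absolutelyContinuous volume _).ae_le (Measure.ae_ne volume 0))
  have hZ : (fun ω => (X₁ ω - X₂ ω) ^ 2 / (X₁ ω + X₂ ω) ^ 2) =ᵐ[ℙ]
      fun ω => (2 * (X₁ ω / (X₁ ω + X₂ ω)) - 1) ^ 2 := by
    filter_upwards [hS₀] with ω hω
    rw [← div_pow]
    congr 1
    field_simp
    ring
  rw [Measure.map_congr hZ]
  exact (HasLaw.fun_comp ⟨by fun_prop, map_two_mul_sub_one_sq_betaMeasure hα₁ hα₂⟩ hW).map_eq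
end

section
/- For sample size n = 2, the statistic 1/α̂ is not dispersively monotone in the shape parameter: for any α₁, α₂ > 0 with α₁ ≠ α₂, it is not the case that the Beta(1/2, α₁) distribution is dispersively smaller than the Beta(1/2, α₂) distribution. (Here 1/α̂ for a sample of size 2 from a gamma distribution with shape α has the Beta(1/2, α) distribution, which is supported on the bounded interval (0,1).) -/
/-!
If `X ≤_disp Y`, then `Q_Y - Q_X` is nondecreasing on `(0, 1)`, where `Q_X` and `Q_Y` are the
quantile functions. When the endpoints of the support of `X` are `a` and `b`, `Q_X` tends to `a` at
`0` and to `b` at `1`; if `Y` is supported in `[a, b]`, then `Q_Y` takes values in `[a, b]`, which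
makes the difference asymptotically nonnegative at `0` and nonpositive at `1`, hence identically
zero and the two laws equal. All Beta laws have support `[0, 1]`, and distinct parameters give
distinct laws because `log x`, `log (1 - x)` and `1` are linearly independent on `(0, 1)`.
-/

open MeasureTheory

/-- The density of the Beta distribution with parameters `1/2` and `α`, as a function on `ℝ`
(vanishing outside `(0,1)`). -/
noncomputable def betaHalfPDF (α : ℝ) : ℝ → ℝ :=
  Set.indicator (Set.Ioo 0 1) (fun z =>
    z ^ (-(1 / 2) : ℝ) * (1 - z) ^ (α - 1) /
      (Real.Gamma (1 / 2) * Real.Gamma α / Real.Gamma (1 / 2 + α)))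

/-- The cumulative distribution function of the Beta distribution `B(1/2, α)`. -/
noncomputable def betaHalfCDF (α : ℝ) (x : ℝ) : ℝ :=
  ∫ t in Set.Iic x, betaHalfPDF α t

/-- The left-continuous quantile function of the Beta distribution `B(1/2, α)`. -/
noncomputable def betaHalfQuantile (α : ℝ) (u : ℝ) : ℝ :=
  sInf {x : ℝ | u ≤ betaHalfCDF α x}

open ProbabilityTheory Set Filter
open scoped Topology

section Quantile

/-- The left-continuous quantile function of a probability measure on `ℝ`. Only levels
`u ∈ (0, 1)` are meaningful: elsewhere the infimum may be a junk value. -/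
noncomputable def quantile (μ : Measure ℝ) (u : ℝ) : ℝ :=
  sInf {x : ℝ | u ≤ cdf μ x}

/-- The dispersive order: `DispersiveLE μ ν` says that any two quantiles of `μ` are at most as far
apart as the corresponding quantiles of `ν`. For the laws `μ` of `X` and `ν` of `Y` this is
`X ≤_disp Y`. -/
def DispersiveLE (μ ν : Measure ℝ) : Prop :=
  ∀ u v : ℝ, 0 < u → u ≤ v → v < 1 → quantile μ v - quantile μ u ≤ quantile ν v - quantile ν u

variable {μ ν : Measure ℝ} {a b u x : ℝ}

lemma quantile_le_iff (hu : u ∈ Ioo 0 1) : quantile μ u ≤ x ↔ u ≤ cdf μ x := by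
  have h_nonempty : {y | u ≤ cdf μ y}.Nonempty :=
    ((tendsto_cdf_atTop μ).eventually_const_le hu.2).exists
  have h_bddBelow : BddBelow {y | u ≤ cdf μ y} := by
    obtain ⟨z, hz⟩ := ((tendsto_cdf_atBot μ).eventually_lt_const hu.1).exists
    exact ⟨z, fun y hy => ((monotone_cdf μ).reflect_lt (hz.trans_le hy)).le⟩
  refine ⟨fun hx => ?_, fun hx => csInf_le h_bddBelow hx⟩
  rw [← (cdf μ).iInf_Ioi_eq x]
  refine le_ciInf fun ⟨y, hy⟩ => ?_
  obtain ⟨z, hz, hzy⟩ := exists_lt_of_csInf_lt h_nonempty (hx.trans_lt hy)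
  exact hz.trans (monotone_cdf μ hzy.le)

lemma le_cdf_quantile (hu : u ∈ Ioo 0 1) : u ≤ cdf μ (quantile μ u) :=
  (quantile_le_iff hu).1 le_rfl

lemma cdf_le_cdf_of_quantile_le (h : ∀ u ∈ Ioo 0 1, quantile ν u ≤ quantile μ u) (x : ℝ) :
    cdf μ x ≤ cdf ν x := by
  refine le_of_forall_lt_imp_le_of_dense fun u hux => ?_
  rcases le_or_gt u 0 with hu | hu
  · exact hu.trans (cdf_nonneg ν x)
  · have hu' : u ∈ Ioo 0 1 := ⟨hu, hux.trans_le (cdf_le_one μ x)⟩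
    exact (quantile_le_iff hu').1 ((h u hu').trans ((quantile_le_iff hu').2 hux.le))

variable [IsProbabilityMeasure μ]

lemma eq_of_eqOn_quantile [IsProbabilityMeasure ν]
    (h : EqOn (quantile μ) (quantile ν) (Ioo 0 1)) : μ = ν :=
  Measure.eq_of_cdf μ ν <| StieltjesFunction.ext fun x =>
    le_antisymm (cdf_le_cdf_of_quantile_le (fun _ hu => (h hu).ge) x)
      (cdf_le_cdf_of_quantile_le (fun _ hu => (h hu).le) x)

lemma quantile_mem_support (hu : u ∈ Ioo 0 1) : quantile μ u ∈ μ.support := by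
  refine (nhds_basis_Ioo _).mem_measureSupport.2 fun ⟨c, d⟩ ⟨hc, hd⟩ => ?_
  have h_lt : cdf μ c < cdf μ (quantile μ u) :=
    (not_le.1 fun h => hc.not_ge ((quantile_le_iff hu).2 h)).trans_le (le_cdf_quantile hu)
  have h_Ioc : 0 < (cdf μ).measure (Ioc c (quantile μ u)) := by
    rw [StieltjesFunction.measure_Ioc]
    exact ENNReal.ofReal_pos.2 (sub_pos.2 h_lt)
  rw [measure_cdf] at h_Ioc
  exact h_Ioc.trans_le (measure_mono (Ioc_subset_Ioo_right hd))

lemma cdf_pos_of_mem_support (ha : a ∈ μ.support) (hx : a < x) : 0 < cdf μ x := by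
  rw [← ENNReal.ofReal_pos, ofReal_cdf]
  exact (Measure.mem_support_iff_forall a).1 ha _ (Iic_mem_nhds hx)

lemma cdf_lt_one_of_mem_support (hb : b ∈ μ.support) (hx : x < b) : cdf μ x < 1 := by
  have h_Ioi : 0 < μ (Ioi x) := (Measure.mem_support_iff_forall b).1 hb _ (Ioi_mem_nhds hx)
  rw [← measure_cdf μ, StieltjesFunction.measure_Ioi _ (tendsto_cdf_atTop μ)] at h_Ioi
  exact sub_pos.1 (ENNReal.ofReal_pos.1 h_Ioi)

lemma tendsto_quantile_nhdsGT_zero (ha : IsLeast μ.support a) :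
    Tendsto (quantile μ) (𝓝[>] 0) (𝓝 a) := by
  have h_Ioo : ∀ᶠ u : ℝ in 𝓝[>] 0, u ∈ Ioo 0 1 := Ioo_mem_nhdsGT one_pos
  refine tendsto_order.2 ⟨fun c hc => ?_, fun c hc => ?_⟩
  · filter_upwards [h_Ioo] with u hu using hc.trans_le (ha.2 (quantile_mem_support hu))
  · obtain ⟨d, had, hdc⟩ := exists_between hc
    filter_upwards [h_Ioo, Ioo_mem_nhdsGT (cdf_pos_of_mem_support ha.1 had)] with u hu hud
    exact ((quantile_le_iff hu).2 hud.2.le).trans_lt hdc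

lemma tendsto_quantile_nhdsLT_one (hb : IsGreatest μ.support b) :
    Tendsto (quantile μ) (𝓝[<] 1) (𝓝 b) := by
  have h_Ioo : ∀ᶠ u : ℝ in 𝓝[<] 1, u ∈ Ioo 0 1 := Ioo_mem_nhdsLT one_pos
  refine tendsto_order.2 ⟨fun c hc => ?_, fun c hc => ?_⟩
  · filter_upwards [h_Ioo, Ioo_mem_nhdsLT (cdf_lt_one_of_mem_support hb.1 hc)] with u hu huc
    exact not_le.1 fun h => huc.1.not_ge ((quantile_le_iff hu).1 h)
  · filter_upwards [h_Ioo] with u hu using (hb.2 (quantile_mem_support hu)).trans_lt hc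

theorem DispersiveLE.eq_of_support_subset_Icc [IsProbabilityMeasure ν] (h : DispersiveLE μ ν)
    (ha : IsLeast μ.support a) (hb : IsGreatest μ.support b) (hν : ν.support ⊆ Icc a b) :
    μ = ν := by
  have hν_mem {u : ℝ} (hu : u ∈ Ioo 0 1) : quantile ν u ∈ Icc a b := hν (quantile_mem_support hu)
  refine eq_of_eqOn_quantile fun u hu => le_antisymm ?_ ?_
  · have h_lim : Tendsto (fun w => quantile ν u + (quantile μ w - a)) (𝓝[>] 0)
        (𝓝 (quantile ν u + (a - a))) :=
      ((tendsto_quantile_nhdsGT_zero ha).sub_const a).const_add _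
    rw [sub_self, add_zero] at h_lim
    refine ge_of_tendsto h_lim ?_
    filter_upwards [Ioo_mem_nhdsGT hu.1] with w hw
    linarith [h w u hw.1 hw.2.le hu.2, (hν_mem ⟨hw.1, hw.2.trans hu.2⟩).1]
  · have h_lim : Tendsto (fun w => quantile μ u + (b - quantile μ w)) (𝓝[<] 1)
        (𝓝 (quantile μ u + (b - b))) :=
      ((tendsto_quantile_nhdsLT_one hb).const_sub b).const_add _
    rw [sub_self, add_zero] at h_lim
    refine ge_of_tendsto h_lim ?_
    filter_upwards [Ioo_mem_nhdsLT hu.2] with w hw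
    linarith [h u w hu.1 hw.1.le hw.2, (hν_mem ⟨hu.1.trans hw.1, hw.2⟩).2]

end Quantile

section Beta

variable {a b a₁ b₁ a₂ b₂ x : ℝ}

lemma betaPDFReal_nonneg (ha : 0 < a) (hb : 0 < b) (x : ℝ) : 0 ≤ betaPDFReal a b x := by
  by_cases hx : 0 < x ∧ x < 1
  · exact (betaPDFReal_pos hx.1 hx.2 ha hb).le
  · exact (if_neg hx).ge

lemma continuousOn_betaPDFReal : ContinuousOn (betaPDFReal a b) (Ioo 0 1) := by
  have h_formula : ContinuousOn
      (fun x : ℝ => 1 / beta a b * x ^ (a - 1) * (1 - x) ^ (b - 1)) (Ioo 0 1) := by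
    refine (continuousOn_const.mul ?_).mul ?_
    · exact continuousOn_id.rpow_const fun x hx => Or.inl hx.1.ne'
    · exact (by fun_prop : ContinuousOn (fun x : ℝ => 1 - x) (Ioo 0 1)).rpow_const
        fun x hx => Or.inl (sub_pos.2 hx.2).ne'
  exact h_formula.congr fun x hx => if_pos hx

lemma log_betaPDFReal (ha : 0 < a) (hb : 0 < b) (hx : x ∈ Ioo 0 1) :
    Real.log (betaPDFReal a b x) =
      (a - 1) * Real.log x + (b - 1) * Real.log (1 - x) - Real.log (beta a b) := by
  have hx₀ : 0 < x := hx.1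
  have hx₁ : 0 < 1 - x := sub_pos.2 hx.2
  have h_beta : 0 < beta a b := beta_pos ha hb
  rw [betaPDFReal, if_pos ⟨hx.1, hx.2⟩, Real.log_mul (by positivity) (by positivity),
    Real.log_mul (by positivity) (by positivity), Real.log_rpow hx₀, Real.log_rpow hx₁,
    one_div, Real.log_inv]
  ring

lemma support_betaMeasure (ha : 0 < a) (hb : 0 < b) : (betaMeasure a b).support = Icc 0 1 := by
  apply Subset.antisymm
  · refine Measure.support_subset_of_isClosed isClosed_Icc ?_
    rw [mem_ae_iff, betaMeasure, withDensity_apply _ measurableSet_Icc.compl]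
    refine setLIntegral_eq_zero measurableSet_Icc.compl fun x hx => ?_
    exact ENNReal.ofReal_eq_zero.2 (if_neg fun h => hx (Ioo_subset_Icc_self h)).le
  · have h_ac : volume.restrict (Ioo 0 1) ≪ betaMeasure a b := by
      have h_pos : ∀ᵐ x ∂volume.restrict (Ioo 0 1), betaPDF a b x ≠ 0 :=
        ae_restrict_of_forall_mem measurableSet_Ioo fun x hx =>
          (ENNReal.ofReal_pos.2 (betaPDFReal_pos hx.1 hx.2 ha hb)).ne'
      refine (withDensity_absolutelyContinuous' (f := betaPDF a b) ?_ h_pos).trans ?_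
      · exact (measurable_betaPDFReal a b).ennreal_ofReal.aemeasurable
      · rw [← restrict_withDensity measurableSet_Ioo]
        exact Measure.absolutelyContinuous_of_le Measure.restrict_le_self
    have h_Ioo : Ioo 0 1 ⊆ (volume.restrict (Ioo (0 : ℝ) 1)).support := by
      simpa only [interior_Ioo, Measure.support_eq_univ, inter_univ] using
        Measure.interior_inter_support (μ := volume) (s := Ioo (0 : ℝ) 1)
    rw [← closure_Ioo zero_ne_one]
    exact closure_minimal (h_Ioo.trans h_ac.support_mono) Measure.isClosed_support

lemma eqOn_betaPDFReal_of_betaMeasure_eq (ha₁ : 0 < a₁) (hb₁ : 0 < b₁) (ha₂ : 0 < a₂)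
    (hb₂ : 0 < b₂) (h : betaMeasure a₁ b₁ = betaMeasure a₂ b₂) :
    EqOn (betaPDFReal a₁ b₁) (betaPDFReal a₂ b₂) (Ioo 0 1) := by
  have h_ae : betaPDF a₁ b₁ =ᵐ[volume] betaPDF a₂ b₂ :=
    (withDensity_eq_iff_of_sigmaFinite (measurable_betaPDFReal a₁ b₁).ennreal_ofReal.aemeasurable
      (measurable_betaPDFReal a₂ b₂).ennreal_ofReal.aemeasurable).1 h
  refine Measure.eqOn_Ioo_of_ae_eq (μ := volume) (ae_restrict_of_ae ?_) continuousOn_betaPDFReal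
    continuousOn_betaPDFReal
  filter_upwards [h_ae] with x hx
  exact (ENNReal.ofReal_eq_ofReal_iff (betaPDFReal_nonneg ha₁ hb₁ x)
    (betaPDFReal_nonneg ha₂ hb₂ x)).1 hx

lemma eq_zero_of_mul_log_add_mul_log_one_sub_eq_const {p q c : ℝ}
    (h : ∀ x ∈ Ioo (0 : ℝ) 1, p * Real.log x + q * Real.log (1 - x) = c) : p = 0 ∧ q = 0 := by
  have h_half : -(p * Real.log 2) - q * Real.log 2 = c := by
    rw [← h (1 / 2) (by norm_num)]
    norm_num [Real.log_div]
    ring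
  have h_third : -(p * Real.log 3) + q * (Real.log 2 - Real.log 3) = c := by
    rw [← h (1 / 3) (by norm_num)]
    norm_num [Real.log_div]
  have h_two_thirds : p * (Real.log 2 - Real.log 3) - q * Real.log 3 = c := by
    rw [← h (2 / 3) (by norm_num)]
    norm_num [Real.log_div]
    ring
  have h_log_two : 0 < Real.log 2 := Real.log_pos one_lt_two
  have h_log_eight_lt : 3 * Real.log 2 < 2 * Real.log 3 := by
    rw [← Real.log_rpow two_pos, ← Real.log_rpow three_pos]
    exact Real.log_lt_log (by norm_num) (by norm_num)
  have h_eq : p = q := by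
    have h_mul : p * Real.log 2 = q * Real.log 2 := by linarith
    exact mul_right_cancel₀ h_log_two.ne' h_mul
  subst h_eq
  have h_zero : p * (2 * Real.log 3 - 3 * Real.log 2) = 0 := by linarith
  have hp : p = 0 := (mul_eq_zero.1 h_zero).resolve_right (sub_pos.2 h_log_eight_lt).ne'
  exact ⟨hp, hp⟩

lemma parameters_eq_of_betaMeasure_eq (ha₁ : 0 < a₁) (hb₁ : 0 < b₁) (ha₂ : 0 < a₂) (hb₂ : 0 < b₂)
    (h : betaMeasure a₁ b₁ = betaMeasure a₂ b₂) : a₁ = a₂ ∧ b₁ = b₂ := by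
  rw [← sub_eq_zero, ← sub_eq_zero (a := b₁)]
  refine eq_zero_of_mul_log_add_mul_log_one_sub_eq_const
    (c := Real.log (beta a₁ b₁) - Real.log (beta a₂ b₂)) fun x hx => ?_
  have h_log := congrArg Real.log (eqOn_betaPDFReal_of_betaMeasure_eq ha₁ hb₁ ha₂ hb₂ h hx)
  rw [log_betaPDFReal ha₁ hb₁ hx, log_betaPDFReal ha₂ hb₂ hx] at h_log
  linarith

lemma cdf_betaMeasure (ha : 0 < a) (hb : 0 < b) (x : ℝ) :
    cdf (betaMeasure a b) x = ∫ t in Iic x, betaPDFReal a b t := by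
  have := isProbabilityMeasureBeta ha hb
  rw [cdf_eq_real, measureReal_def, betaMeasure, withDensity_apply _ measurableSet_Iic,
    integral_eq_lintegral_of_nonneg_ae (ae_of_all _ (betaPDFReal_nonneg ha hb))
      (by fun_prop)]
  rfl

lemma betaHalfPDF_eq_betaPDFReal (α : ℝ) : betaHalfPDF α = betaPDFReal (1 / 2) α := by
  funext x
  rw [betaHalfPDF, betaPDFReal, beta, indicator_apply, show (1 / 2 - 1 : ℝ) = -(1 / 2) by norm_num]
  refine if_congr Iff.rfl ?_ rfl
  ring

lemma betaHalfQuantile_eq_quantile {α : ℝ} (hα : 0 < α) :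
    betaHalfQuantile α = quantile (betaMeasure (1 / 2) α) := by
  funext u
  simp only [betaHalfQuantile, betaHalfCDF, quantile, cdf_betaMeasure one_half_pos hα,
    betaHalfPDF_eq_betaPDFReal]

end Beta

theorem inv_momentEstimator_not_dispersive_monotone_general {a₁ b₁ a₂ b₂ : ℝ}
    (ha₁ : 0 < a₁) (hb₁ : 0 < b₁) (ha₂ : 0 < a₂) (hb₂ : 0 < b₂) (hne : (a₁, b₁) ≠ (a₂, b₂)) :
    ¬ DispersiveLE (betaMeasure a₁ b₁) (betaMeasure a₂ b₂) := by
  intro h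
  have := isProbabilityMeasureBeta ha₁ hb₁
  have := isProbabilityMeasureBeta ha₂ hb₂
  have h_support := support_betaMeasure ha₁ hb₁
  have h_eq : betaMeasure a₁ b₁ = betaMeasure a₂ b₂ :=
    h.eq_of_support_subset_Icc (h_support ▸ isLeast_Icc zero_le_one)
      (h_support ▸ isGreatest_Icc zero_le_one) (support_betaMeasure ha₂ hb₂).subset
  exact hne (Prod.ext_iff.2 (parameters_eq_of_betaMeasure_eq ha₁ hb₁ ha₂ hb₂ h_eq))

/-- For `n = 2`, the statistic `1/α̂` (which has the Beta `(1/2, α)`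
distribution) is not dispersively monotone in the shape parameter `α`: for `α₁ ≠ α₂`,
the Beta `(1/2, α₁)` distribution is never dispersively smaller than `Beta (1/2, α₂)`. -/
theorem inv_momentEstimator_not_dispersive_monotone
    (α₁ α₂ : ℝ) (hα₁ : 0 < α₁) (hα₂ : 0 < α₂) (hne : α₁ ≠ α₂) :
    ¬ (∀ u v : ℝ, 0 < u → u ≤ v → v < 1 →
        betaHalfQuantile α₁ v - betaHalfQuantile α₁ u ≤
          betaHalfQuantile α₂ v - betaHalfQuantile α₂ u) := by
  rw [betaHalfQuantile_eq_quantile hα₁, betaHalfQuantile_eq_quantile hα₂]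
  exact inv_momentEstimator_not_dispersive_monotone_general one_half_pos hα₁ one_half_pos hα₂
    fun h => hne (Prod.ext_iff.1 h).2
end

section
/- Let F(t) = 1 − 2π/(3√3 t²) for t ≥ √2 and F(t) = 1 − √(2−t²)/(√3 t) + π/(3√3 t²) − 2 arcsin(t/√2)/(√3 t²) for √2/2 ≤ t ≤ √2, and let G(t) = 1 − 10π(4t² − 3)/(27√3 t⁴) for t ≥ √2 and G(t) = 1 + [√(2−t²)(−33t⁴ − 13t² + 8) + 5πt(4t² − 3) − 30t(4t² − 3) arcsin(t/√2)]/(27√3 t⁵) for √2/2 ≤ t ≤ √2 (these are the CDFs of the statistic T = X̄/S for samples of size 3 from the exponential distribution and from the gamma distribution with shape 2, respectively). Then the function x ↦ G⁻¹(F(x))/x is not monotone on (√2/2, ∞): with x₁ = 11/10 < x₂ = √6/2 < x₃ = √2, one has G⁻¹(F(x₁))/x₁ > G⁻¹(F(x₂))/x₂ and G⁻¹(F(x₃))/x₃ > G⁻¹(F(x₂))/x₂, where G⁻¹ denotes the (generalized) inverse of G. -/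
open MeasureTheory Real

/-- The cumulative distribution function of `T = X̄/S` for a sample of size `3` from the
exponential distribution with density `e^{-x}`. -/
noncomputable def expTCDF (t : ℝ) : ℝ :=
  if Real.sqrt 2 ≤ t then 1 - 2 * π / (3 * Real.sqrt 3 * t ^ 2)
  else if Real.sqrt 2 / 2 ≤ t then
    -(Real.sqrt (2 - t ^ 2) / (Real.sqrt 3 * t)) + π / (3 * Real.sqrt 3 * t ^ 2) -
      2 * Real.arcsin (t / Real.sqrt 2) / (Real.sqrt 3 * t ^ 2) + 1
  else 0

/-- The cumulative distribution function of `T = X̄/S` for a sample of size `3` from the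
gamma distribution with density `x e^{-x}` (shape `2`, scale `1`). -/
noncomputable def gammaTwoTCDF (t : ℝ) : ℝ :=
  if Real.sqrt 2 ≤ t then 1 - 10 * π * (4 * t ^ 2 - 3) / (27 * Real.sqrt 3 * t ^ 4)
  else if Real.sqrt 2 / 2 ≤ t then
    (Real.sqrt (2 - t ^ 2) * (-33 * t ^ 4 - 13 * t ^ 2 + 8) +
        5 * π * t * (4 * t ^ 2 - 3) -
        30 * t * (4 * t ^ 2 - 3) * Real.arcsin (t / Real.sqrt 2)) /
      (27 * Real.sqrt 3 * t ^ 5) + 1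
  else 0

/-- The left-continuous quantile (generalized inverse) of `gammaTwoTCDF`. -/
noncomputable def gammaTwoTQuantile (u : ℝ) : ℝ :=
  sInf {x : ℝ | u ≤ gammaTwoTCDF x}

/-!
Put `t = √2 sin θ` and `φ = 3θ - π/2`. On `[π/6, π/2]` the tail `1 - G (√2 sin θ)` has derivative a
positive multiple of `φ cos φ - sin φ`, which is nonpositive for `φ ∈ [0, π]`. Hence `G` is monotone
on the whole line, and for `0 < u < 1` bounds on `G⁻¹ u` follow from comparing `u` with values
of `G`.

The ratios at `x₁`, `x₂`, `x₃` are about `1.327`, `1.315`, `1.321`, and are separated by comparing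
`F x` with `G (r x)` for `r = 1.318` at `x₂` and `r = 1.32` at `x₁` and `x₃`. Since `r x ≥ √2` each
time, only the elementary branch of `G` enters. The values of `F` come from its own angular form at
`θ = π/3` (for `x₂`), at `θ = π/2` (for `x₃`) and at `θ = π/4 + arcsin 0.21 / 2` (for `x₁`, since
`2 sin² θ = 1 - cos 2θ = 1.21`).
-/

open Set Filter Topology

lemma sInf_setOf_le_mem_Icc {α β : Type*} [ConditionallyCompleteLinearOrder α] [LinearOrder β]
    {G : α → β} (hG : Monotone G) {a b : α} {u : β} (ha : G a < u) (hb : u ≤ G b) :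
    sInf {x | u ≤ G x} ∈ Icc a b := by
  have ha_le : ∀ x ∈ {x | u ≤ G x}, a ≤ x := fun x hx => (hG.reflect_lt (ha.trans_le hx)).le
  exact ⟨le_csInf ⟨b, hb⟩ ha_le, csInf_le ⟨a, ha_le⟩ hb⟩

lemma mul_cos_le_sin {x : ℝ} (h₀ : 0 ≤ x) (h₁ : x ≤ π) : x * cos x ≤ sin x := by
  rcases lt_or_ge x (π / 2) with h | h
  · have hcos : 0 < cos x := cos_pos_of_mem_Ioo ⟨by linarith, h⟩
    rw [← le_div_iff₀ hcos, ← tan_eq_sin_div_cos]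
    exact le_tan h₀ h
  · have hcos : cos x ≤ 0 := cos_nonpos_of_pi_div_two_le_of_le h (by linarith)
    exact (mul_nonpos_of_nonneg_of_nonpos h₀ hcos).trans (sin_nonneg_of_nonneg_of_le_pi h₀ h₁)

lemma sin_pos_of_mem_Icc_pi_div_six {θ : ℝ} (hθ : θ ∈ Icc (π / 6) (π / 2)) : 0 < sin θ :=
  sin_pos_of_pos_of_lt_pi (by linarith [hθ.1, pi_pos]) (by linarith [hθ.2, pi_pos])

lemma cos_nonneg_of_mem_Icc_pi_div_six {θ : ℝ} (hθ : θ ∈ Icc (π / 6) (π / 2)) : 0 ≤ cos θ :=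
  cos_nonneg_of_mem_Icc ⟨by linarith [hθ.1, pi_pos], hθ.2⟩

lemma surjOn_sqrt_two_mul_sin :
    SurjOn (fun θ => √2 * sin θ) (Icc (π / 6) (π / 2)) (Icc (√2 / 2) √2) := by
  have hivt := intermediate_value_Icc (f := fun θ => √2 * sin θ)
    (by linarith [pi_pos] : π / 6 ≤ π / 2) (by fun_prop)
  simpa only [SurjOn, sin_pi_div_six, sin_pi_div_two, mul_one_div, mul_one] using hivt

lemma sqrt_two_mul_sin_mem_Ico {θ : ℝ} (hθ : θ ∈ Ico (π / 6) (π / 2)) :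
    √2 * sin θ ∈ Ico (√2 / 2) √2 := by
  have hsqrt : 0 < √2 := by positivity
  have hge : 1 / 2 ≤ sin θ := by
    rw [← sin_pi_div_six]
    exact sin_le_sin_of_le_of_le_pi_div_two (by linarith [pi_pos]) hθ.2.le hθ.1
  have hlt : sin θ < 1 := by
    rw [← sin_pi_div_two]
    exact sin_lt_sin_of_lt_of_le_pi_div_two (by linarith [hθ.1, pi_pos]) le_rfl hθ.2
  exact ⟨by simpa only [mul_one_div] using mul_le_mul_of_nonneg_left hge hsqrt.le,
    mul_lt_of_lt_one_right hsqrt hlt⟩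

lemma arcsin_sqrt_two_mul_sin_div {θ : ℝ} (hθ : θ ∈ Icc (-(π / 2)) (π / 2)) :
    arcsin (√2 * sin θ / √2) = θ := by
  rw [mul_div_cancel_left₀ _ (by positivity), arcsin_sin hθ.1 hθ.2]

lemma sqrt_two_sub_sqrt_two_mul_sin_sq {θ : ℝ} (hθ : 0 ≤ cos θ) :
    √(2 - (√2 * sin θ) ^ 2) = √2 * cos θ := by
  have hsq : 2 - (√2 * sin θ) ^ 2 = 2 * cos θ ^ 2 := by
    rw [mul_pow, sq_sqrt zero_le_two, cos_sq']
    ring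
  rw [hsq, sqrt_mul zero_le_two, sqrt_sq hθ]

lemma expTCDF_sqrt_two_mul_sin {θ : ℝ} (hθ : θ ∈ Icc (π / 6) (π / 2)) :
    expTCDF (√2 * sin θ) = 1 - (sin θ * cos θ + θ - π / 6) / sin θ ^ 2 / √3 := by
  rcases hθ.2.eq_or_lt with rfl | hlt
  · rw [sin_pi_div_two, cos_pi_div_two, mul_one, expTCDF, if_pos le_rfl, sq_sqrt zero_le_two]
    field_simp
    ring
  · obtain ⟨hge, hlt⟩ := sqrt_two_mul_sin_mem_Ico ⟨hθ.1, hlt⟩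
    have hsin := sin_pos_of_mem_Icc_pi_div_six hθ
    rw [expTCDF, if_neg hlt.not_ge, if_pos hge,
      sqrt_two_sub_sqrt_two_mul_sin_sq (cos_nonneg_of_mem_Icc_pi_div_six hθ),
      arcsin_sqrt_two_mul_sin_div ⟨by linarith [hθ.1, pi_pos], hθ.2⟩,
      mul_pow, sq_sqrt zero_le_two]
    field_simp
    ring

/-- The tail `1 - G` of `G = gammaTwoTCDF` on `[√2 / 2, √2]` as a function of the angle `θ` with
`t = √2 * sin θ`. Up to the factor `108 * √3` it is kept in the form `A θ + B θ * (3 * θ - π / 2)`,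
because `A' + 3 * B` and `B'` both reduce to a single term. -/
noncomputable def gammaTwoTTail (θ : ℝ) : ℝ :=
  (cos θ * (132 * sin θ ^ 4 + 26 * sin θ ^ 2 - 8) / sin θ ^ 5 +
    10 * ((8 * sin θ ^ 2 - 3) / sin θ ^ 4) * (3 * θ - π / 2)) / (108 * √3)

lemma gammaTwoTCDF_of_ge {t : ℝ} (ht : √2 ≤ t) :
    gammaTwoTCDF t = 1 - 10 * π / 27 * ((4 * t ^ 2 - 3) / (t ^ 2) ^ 2) / √3 := by
  rw [gammaTwoTCDF, if_pos ht]
  ring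

lemma gammaTwoTCDF_sqrt_two_mul_sin {θ : ℝ} (hθ : θ ∈ Icc (π / 6) (π / 2)) :
    gammaTwoTCDF (√2 * sin θ) = 1 - gammaTwoTTail θ := by
  rw [gammaTwoTTail]
  rcases hθ.2.eq_or_lt with rfl | hlt
  · rw [sin_pi_div_two, cos_pi_div_two, mul_one, gammaTwoTCDF_of_ge le_rfl, sq_sqrt zero_le_two]
    field_simp
    ring
  · obtain ⟨hge, hlt⟩ := sqrt_two_mul_sin_mem_Ico ⟨hθ.1, hlt⟩
    have hsin := sin_pos_of_mem_Icc_pi_div_six hθ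
    have hsq : √2 ^ 2 = (2 : ℝ) := sq_sqrt zero_le_two
    have hpow₄ : √2 ^ 4 = (4 : ℝ) := by rw [pow_mul √2 2 2, hsq]; norm_num
    have hpow₅ : √2 ^ 5 = 4 * √2 := by rw [pow_succ, hpow₄]
    rw [gammaTwoTCDF, if_neg hlt.not_ge, if_pos hge,
      sqrt_two_sub_sqrt_two_mul_sin_sq (cos_nonneg_of_mem_Icc_pi_div_six hθ),
      arcsin_sqrt_two_mul_sin_div ⟨by linarith [hθ.1, pi_pos], hθ.2⟩]
    simp only [mul_pow, hsq, hpow₄, hpow₅]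
    field_simp
    ring

lemma hasDerivAt_eight_mul_sin_sq_sub_three_div {θ : ℝ} (hθ : sin θ ≠ 0) :
    HasDerivAt (fun x => (8 * sin x ^ 2 - 3) / sin x ^ 4)
      (4 * cos θ * sin (3 * θ) / sin θ ^ 6) θ := by
  have hsin := hasDerivAt_sin θ
  refine ((((hsin.fun_pow 2).const_mul 8).sub_const 3).fun_div (hsin.fun_pow 4)
    (pow_ne_zero 4 hθ)).congr_deriv ?_
  rw [sin_three_mul]
  field_simp
  ring

lemma hasDerivAt_cos_mul_div_sin_pow {θ : ℝ} (hθ : sin θ ≠ 0) :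
    HasDerivAt (fun x => cos x * (132 * sin x ^ 4 + 26 * sin x ^ 2 - 8) / sin x ^ 5)
      (40 * cos θ * cos (3 * θ) / sin θ ^ 6 - 30 * ((8 * sin θ ^ 2 - 3) / sin θ ^ 4)) θ := by
  have hsin := hasDerivAt_sin θ
  refine (((hasDerivAt_cos θ).fun_mul ((((hsin.fun_pow 4).const_mul 132).fun_add
    ((hsin.fun_pow 2).const_mul 26)).sub_const 8)).fun_div (hsin.fun_pow 5)
    (pow_ne_zero 5 hθ)).congr_deriv ?_
  have hcos_sq : cos θ ^ 2 = 1 - sin θ ^ 2 := cos_sq' θ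
  have hcos_four : cos θ ^ 4 = (1 - sin θ ^ 2) ^ 2 := by rw [← hcos_sq]; ring
  rw [cos_three_mul]
  field_simp
  ring_nf
  rw [hcos_four, hcos_sq]
  ring

lemma hasDerivAt_gammaTwoTTail {θ : ℝ} (hθ : sin θ ≠ 0) :
    HasDerivAt gammaTwoTTail
      (10 * cos θ / (27 * √3 * sin θ ^ 6) *
        ((3 * θ - π / 2) * cos (3 * θ - π / 2) - sin (3 * θ - π / 2))) θ := by
  have hφ : HasDerivAt (fun x : ℝ => 3 * x - π / 2) 3 θ := by
    simpa using ((hasDerivAt_id θ).const_mul 3).sub_const (π / 2)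
  refine (((hasDerivAt_cos_mul_div_sin_pow hθ).fun_add
    (((hasDerivAt_eight_mul_sin_sq_sub_three_div hθ).const_mul 10).fun_mul hφ)).div_const
      (108 * √3)).congr_deriv ?_
  rw [cos_sub_pi_div_two, sin_sub_pi_div_two]
  field_simp
  ring

lemma antitoneOn_gammaTwoTTail : AntitoneOn gammaTwoTTail (Icc (π / 6) (π / 2)) := by
  have hderiv : ∀ θ ∈ Icc (π / 6) (π / 2), HasDerivAt gammaTwoTTail _ θ := fun θ hθ =>
    hasDerivAt_gammaTwoTTail (sin_pos_of_mem_Icc_pi_div_six hθ).ne'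
  refine antitoneOn_of_hasDerivWithinAt_nonpos (convex_Icc _ _) (HasDerivAt.continuousOn hderiv)
    (fun θ hθ => (hderiv θ (interior_subset hθ)).hasDerivWithinAt) fun θ hθ => ?_
  replace hθ := interior_subset hθ
  have hcos := cos_nonneg_of_mem_Icc_pi_div_six hθ
  have hsin := sin_pos_of_mem_Icc_pi_div_six hθ
  exact mul_nonpos_of_nonneg_of_nonpos (by positivity)
    (sub_nonpos.2 (mul_cos_le_sin (by linarith [hθ.1]) (by linarith [hθ.2])))

lemma antitoneOn_four_mul_sub_three_div_sq :
    AntitoneOn (fun s : ℝ => (4 * s - 3) / s ^ 2) (Ici (3 / 2)) := by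
  intro s hs t ht hst
  rw [mem_Ici] at hs ht
  change (4 * t - 3) / t ^ 2 ≤ (4 * s - 3) / s ^ 2
  have hfactor : 0 ≤ s * (2 * t - 3) + t * (2 * s - 3) :=
    add_nonneg (mul_nonneg (by linarith) (by linarith)) (mul_nonneg (by linarith) (by linarith))
  rw [div_le_div_iff₀ (by positivity) (by positivity), ← sub_nonneg]
  calc 0 ≤ (t - s) * (s * (2 * t - 3) + t * (2 * s - 3)) :=
        mul_nonneg (sub_nonneg.2 hst) hfactor
    _ = (4 * s - 3) * t ^ 2 - (4 * t - 3) * s ^ 2 := by ring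

lemma monotoneOn_gammaTwoTCDF_Ici : MonotoneOn gammaTwoTCDF (Ici √2) := by
  intro s hs t ht hst
  rw [mem_Ici] at hs ht
  have hst_sq : s ^ 2 ≤ t ^ 2 := pow_le_pow_left₀ ((sqrt_nonneg 2).trans hs) hst 2
  have htwo : 2 ≤ s ^ 2 := (sqrt_le_iff.1 hs).2
  rw [gammaTwoTCDF_of_ge hs, gammaTwoTCDF_of_ge ht]
  gcongr 1 - 10 * π / 27 * ?_ / √3
  exact antitoneOn_four_mul_sub_three_div_sq (mem_Ici.2 (by linarith))
    (mem_Ici.2 (by linarith)) hst_sq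

lemma monotoneOn_gammaTwoTCDF_Icc : MonotoneOn gammaTwoTCDF (Icc (√2 / 2) √2) := by
  intro s hs t ht hst
  obtain ⟨α, hα, rfl⟩ := surjOn_sqrt_two_mul_sin hs
  obtain ⟨β, hβ, rfl⟩ := surjOn_sqrt_two_mul_sin ht
  have hsin : sin α ≤ sin β := le_of_mul_le_mul_left hst (by positivity)
  have hαβ : α ≤ β := (strictMonoOn_sin.le_iff_le ⟨by linarith [hα.1, pi_pos], hα.2⟩
    ⟨by linarith [hβ.1, pi_pos], hβ.2⟩).1 hsin
  simp only [gammaTwoTCDF_sqrt_two_mul_sin, hα, hβ]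
  gcongr
  exact antitoneOn_gammaTwoTTail hα hβ hαβ

lemma gammaTwoTCDF_of_le {t : ℝ} (ht : t ≤ √2 / 2) : gammaTwoTCDF t = 0 := by
  have hsqrt : 0 < √2 := by positivity
  rcases ht.eq_or_lt with rfl | hlt
  · have hangle := gammaTwoTCDF_sqrt_two_mul_sin ⟨le_rfl, by linarith [pi_pos]⟩
    rw [gammaTwoTTail, sin_pi_div_six, cos_pi_div_six, mul_one_div] at hangle
    rw [hangle]
    field_simp
    ring
  · rw [gammaTwoTCDF, if_neg (by linarith), if_neg hlt.not_ge]

lemma monotone_gammaTwoTCDF : Monotone gammaTwoTCDF := by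
  have hsqrt : √2 / 2 ≤ √2 := half_le_self (sqrt_nonneg 2)
  have hzero : MonotoneOn gammaTwoTCDF (Iic (√2 / 2)) := fun s hs t ht _ => by
    rw [gammaTwoTCDF_of_le hs, gammaTwoTCDF_of_le ht]
  have hpos := monotoneOn_gammaTwoTCDF_Icc.union_right monotoneOn_gammaTwoTCDF_Ici
    (isGreatest_Icc hsqrt) isLeast_Ici
  rw [Icc_union_Ici_eq_Ici hsqrt] at hpos
  exact hzero.Iic_union_Ici hpos

lemma tendsto_gammaTwoTCDF_atTop : Tendsto gammaTwoTCDF atTop (𝓝 1) := by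
  have hinv : Tendsto (fun t : ℝ => (t ^ 2)⁻¹) atTop (𝓝 0) :=
    tendsto_inv_atTop_zero.comp (tendsto_pow_atTop two_ne_zero)
  have hlim := ((hinv.const_mul 4).sub ((hinv.pow 2).const_mul 3)).const_mul
    (10 * π / 27) |>.div_const √3 |>.const_sub 1
  simp only [mul_zero, ne_eq, two_ne_zero, not_false_eq_true, zero_pow, sub_zero, zero_div] at hlim
  refine hlim.congr' ?_
  filter_upwards [eventually_ge_atTop √2] with t ht
  have ht_pos : 0 < t := (by positivity : 0 < √2).trans_le ht
  rw [gammaTwoTCDF_of_ge ht]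
  field_simp

lemma gammaTwoTQuantile_le {u b : ℝ} (hu : 0 < u) (hb : u ≤ gammaTwoTCDF b) :
    gammaTwoTQuantile u ≤ b :=
  (sInf_setOf_le_mem_Icc monotone_gammaTwoTCDF ((gammaTwoTCDF_of_le le_rfl).trans_lt hu) hb).2

lemma le_gammaTwoTQuantile {u a : ℝ} (hu : u < 1) (ha : gammaTwoTCDF a < u) :
    a ≤ gammaTwoTQuantile u :=
  have ⟨_, hb⟩ := (tendsto_gammaTwoTCDF_atTop.eventually_const_le hu).exists
  (sInf_setOf_le_mem_Icc monotone_gammaTwoTCDF ha hb).1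

lemma sqrt_two_mul_sin_pi_div_three : √2 * sin (π / 3) = √6 / 2 := by
  rw [sin_pi_div_three, ← mul_div_assoc, ← sqrt_mul zero_le_two]
  norm_num

lemma expTCDF_sqrt_six_div_two : expTCDF (√6 / 2) = 1 - (√3 / 3 + 2 * π / 9) / √3 := by
  rw [← sqrt_two_mul_sin_pi_div_three,
    expTCDF_sqrt_two_mul_sin ⟨by linarith [pi_pos], by linarith [pi_pos]⟩,
    sin_pi_div_three, cos_pi_div_three, div_pow, sq_sqrt zero_le_three]
  ring

lemma expTCDF_sqrt_two : expTCDF √2 = 1 - π / 3 / √3 := by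
  have hangle := expTCDF_sqrt_two_mul_sin ⟨by linarith [pi_pos], le_refl (π / 2)⟩
  rw [sin_pi_div_two, cos_pi_div_two, mul_one] at hangle
  rw [hangle]
  ring

lemma sin_sq_pi_div_four_add (x : ℝ) : sin (π / 4 + x / 2) ^ 2 = (1 + sin x) / 2 := by
  rw [sin_sq_eq_half_sub, show 2 * (π / 4 + x / 2) = x + π / 2 by ring, cos_add_pi_div_two]
  ring

lemma sin_mul_cos_pi_div_four_add (x : ℝ) :
    sin (π / 4 + x / 2) * cos (π / 4 + x / 2) = cos x / 2 := by
  have hdouble := sin_two_mul (π / 4 + x / 2)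
  rw [show 2 * (π / 4 + x / 2) = x + π / 2 by ring, sin_add_pi_div_two] at hdouble
  linarith

lemma expTCDF_eleven_tenths : expTCDF (11 / 10) =
    1 - (cos (arcsin 0.21) / 2 + arcsin 0.21 / 2 + π / 12) / 0.605 / √3 := by
  set θ := π / 4 + arcsin 0.21 / 2 with hθ_def
  have harcsin : 0 ≤ arcsin 0.21 := arcsin_nonneg.2 (by norm_num)
  have hθ : θ ∈ Icc (π / 6) (π / 2) :=
    ⟨by linarith [pi_pos], by linarith [arcsin_le_pi_div_two 0.21]⟩
  have hsin_sq : sin θ ^ 2 = 0.605 := by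
    rw [sin_sq_pi_div_four_add, sin_arcsin (by norm_num) (by norm_num)]
    norm_num
  have ht : √2 * sin θ = 11 / 10 := by
    have hsin := sin_pos_of_mem_Icc_pi_div_six hθ
    refine (sq_eq_sq₀ (by positivity) (by norm_num)).1 ?_
    rw [mul_pow, sq_sqrt zero_le_two, hsin_sq]
    norm_num
  rw [← ht, expTCDF_sqrt_two_mul_sin hθ, hsin_sq, sin_mul_cos_pi_div_four_add, hθ_def]
  ring

lemma arcsin_le_of_le_sub_cube {x y : ℝ} (hy : 0 ≤ y) (h : x ≤ y - y ^ 3 / 6) :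
    arcsin x ≤ y := by
  rcases lt_or_ge y (π / 2) with hlt | hge
  · rw [arcsin_le_iff_le_sin' ⟨by linarith [pi_pos], hlt⟩]
    exact h.trans (sin_ge_sub_cube hy)
  · exact (arcsin_le_pi_div_two x).trans hge

lemma gammaTwoTQuantile_expTCDF_div_sqrt_six_div_two_le :
    gammaTwoTQuantile (expTCDF (√6 / 2)) / (√6 / 2) ≤ 1.318 := by
  have hsqrt : 1.732 < √3 := lt_sqrt_of_sq_lt (by norm_num)
  have hsq : (1.318 * (√6 / 2)) ^ 2 = 1.318 ^ 2 * 1.5 := by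
    rw [mul_pow, div_pow, sq_sqrt (by norm_num)]
    norm_num
  have hge : √2 ≤ 1.318 * (√6 / 2) := sqrt_le_iff.2 ⟨by positivity, by rw [hsq]; norm_num⟩
  rw [div_le_iff₀ (by positivity)]
  refine gammaTwoTQuantile_le ?_ ?_
  · rw [expTCDF_sqrt_six_div_two, sub_pos, div_lt_one (by positivity)]
    linarith [pi_lt_d2]
  · rw [gammaTwoTCDF_of_ge hge, expTCDF_sqrt_six_div_two, hsq]
    gcongr 1 - ?_ / √3
    linarith [pi_lt_d2]

lemma le_gammaTwoTQuantile_expTCDF_div_sqrt_two :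
    1.32 ≤ gammaTwoTQuantile (expTCDF √2) / √2 := by
  have hsq : (1.32 * √2) ^ 2 = 1.32 ^ 2 * 2 := by rw [mul_pow, sq_sqrt zero_le_two]
  have hge : √2 ≤ 1.32 * √2 := le_mul_of_one_le_left (sqrt_nonneg 2) (by norm_num)
  rw [le_div_iff₀ (by positivity)]
  refine le_gammaTwoTQuantile ?_ ?_
  · rw [expTCDF_sqrt_two]
    exact sub_lt_self 1 (by positivity)
  · rw [gammaTwoTCDF_of_ge hge, expTCDF_sqrt_two, hsq]
    gcongr 1 - ?_ / √3
    linarith [pi_pos]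

lemma le_gammaTwoTQuantile_expTCDF_div_eleven_tenths :
    1.32 ≤ gammaTwoTQuantile (expTCDF (11 / 10)) / (11 / 10) := by
  have harcsin_nonneg : 0 ≤ arcsin 0.21 := arcsin_nonneg.2 (by norm_num)
  have harcsin_le : arcsin 0.21 ≤ 0.212 := arcsin_le_of_le_sub_cube (by norm_num) (by norm_num)
  have hcos_nonneg : 0 ≤ cos (arcsin 0.21) := cos_arcsin_nonneg 0.21
  have hcos_le : cos (arcsin 0.21) ≤ 0.978 := by
    rw [cos_arcsin]
    exact sqrt_le_iff.2 (by norm_num)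
  have hge : √2 ≤ 1.32 * (11 / 10) := sqrt_le_iff.2 (by norm_num)
  rw [le_div_iff₀ (by norm_num)]
  refine le_gammaTwoTQuantile ?_ ?_
  · rw [expTCDF_eleven_tenths]
    exact sub_lt_self 1 (by positivity)
  · rw [gammaTwoTCDF_of_ge hge, expTCDF_eleven_tenths]
    gcongr 1 - ?_ / √3
    calc (cos (arcsin 0.21) / 2 + arcsin 0.21 / 2 + π / 12) / 0.605
        ≤ (0.978 / 2 + 0.212 / 2 + π / 12) / 0.605 := by gcongr
      _ < 10 * π / 27 * ((4 * (1.32 * (11 / 10)) ^ 2 - 3) / ((1.32 * (11 / 10)) ^ 2) ^ 2) := by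
        norm_num
        linarith [pi_gt_d2]

/-- The function `x ↦ G⁻¹(F(x))/x` (with `F = expTCDF`,
`G = gammaTwoTCDF`) is not monotone on `(√2/2, ∞)`: its value at `x₂ = √6/2` is strictly
smaller than its values at `x₁ = 11/10 < x₂` and at `x₃ = √2 > x₂`. -/
theorem star_ratio_not_monotone :
    (¬ MonotoneOn (fun x => gammaTwoTQuantile (expTCDF x) / x) (Set.Ioi (Real.sqrt 2 / 2)) ∧
      ¬ AntitoneOn (fun x => gammaTwoTQuantile (expTCDF x) / x) (Set.Ioi (Real.sqrt 2 / 2))) ∧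
    gammaTwoTQuantile (expTCDF (Real.sqrt 6 / 2)) / (Real.sqrt 6 / 2) <
      gammaTwoTQuantile (expTCDF (11 / 10)) / (11 / 10) ∧
    gammaTwoTQuantile (expTCDF (Real.sqrt 6 / 2)) / (Real.sqrt 6 / 2) <
      gammaTwoTQuantile (expTCDF (Real.sqrt 2)) / Real.sqrt 2 := by
  have hx₁ : √2 / 2 < 11 / 10 := by
    linarith [(sqrt_lt' (by norm_num : (0 : ℝ) < 2)).2 (by norm_num : (2 : ℝ) < 2 ^ 2)]
  have hx₁₂ : 11 / 10 < √6 / 2 := by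
    linarith [lt_sqrt_of_sq_lt (by norm_num : (2.2 : ℝ) ^ 2 < 6)]
  have hx₂₃ : √6 / 2 < √2 := by
    rw [← sqrt_two_mul_sin_pi_div_three]
    exact (sqrt_two_mul_sin_mem_Ico ⟨by linarith [pi_pos], by linarith [pi_pos]⟩).2
  have h₁₂ := gammaTwoTQuantile_expTCDF_div_sqrt_six_div_two_le.trans_lt
    ((by norm_num : (1.318 : ℝ) < 1.32).trans_le le_gammaTwoTQuantile_expTCDF_div_eleven_tenths)
  have h₃₂ := gammaTwoTQuantile_expTCDF_div_sqrt_six_div_two_le.trans_lt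
    ((by norm_num : (1.318 : ℝ) < 1.32).trans_le le_gammaTwoTQuantile_expTCDF_div_sqrt_two)
  exact ⟨not_monotoneOn_not_antitoneOn_iff_exists_lt_lt.2 ⟨11 / 10, hx₁, √6 / 2, hx₁.trans hx₁₂,
    √2, (hx₁.trans hx₁₂).trans hx₂₃, hx₁₂, hx₂₃, .inr ⟨h₁₂, h₃₂⟩⟩, h₁₂, h₃₂⟩
end

section
/- For sample size n = 2, the moment estimator α̂ is increasing in the shape parameter α with respect to the star order: for any 0 < α₁ < α₂, if α̂₁ has density f^{α₁}(x) = (1/B(1/2,α₁)) x^{−3/2}(1 − 1/x)^{α₁−1} on (1,∞) and α̂₂ has density f^{α₂}(x) = (1/B(1/2,α₂)) x^{−3/2}(1 − 1/x)^{α₂−1} on (1,∞), then α̂₁ ≤_* α̂₂; that is, with F and G the corresponding CDFs, the function x ↦ G⁻¹(F(x))/x is increasing on (1,∞). -/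
open MeasureTheory

/-- The density of the moment estimator `α̂` for sample size `n = 2` from a gamma
distribution with shape `α`: `f^α(x) = (1/B(1/2,α)) x^{-3/2}(1-1/x)^{α-1}` for `x > 1`,
extended by `0` elsewhere. -/
noncomputable def alphaHatPDF (α : ℝ) : ℝ → ℝ :=
  Set.indicator (Set.Ioi 1) (fun x =>
    (1 / (Real.Gamma (1 / 2) * Real.Gamma α / Real.Gamma (1 / 2 + α))) *
      x ^ (-(3 / 2) : ℝ) * (1 - 1 / x) ^ (α - 1))

/-- The cumulative distribution function of `α̂` for sample size `n = 2`. -/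
noncomputable def alphaHatCDF (α : ℝ) (x : ℝ) : ℝ :=
  ∫ t in Set.Iic x, alphaHatPDF α t

/-- The left-continuous quantile function of `α̂` for sample size `n = 2`. -/
noncomputable def alphaHatQuantile (α : ℝ) (u : ℝ) : ℝ :=
  sInf {x : ℝ | u ≤ alphaHatCDF α x}

/-!
Write `F`, `G` for the distribution functions with shapes `a ≤ b`. Monotonicity of `G⁻¹(F(x)) / x`
says that every line through the origin is crossed only once: `F y ≤ G (c * y)` implies
`F x ≤ G (c * x)` for `x ≤ y`.

The difference `F t - G (c * t)` has the density `f t - c * g (c * t)`, which is nonnegative exactly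
when `log (f t / g (c * t)) ≥ log c`. For `c ≥ 1` the derivative of this log-ratio on `(1, ∞)` is a
positive function times an antitone one, so the log-ratio is quasiconcave and the density is
nonnegative on an interval. As the difference is nonpositive at `1` and vanishes at `∞`, it cannot
be positive and later return to a nonpositive value.

For `c = 1` the log-ratio is even antitone, whence `G ≤ F`, and this excludes the slopes `c < 1`.
-/

open Set Filter Topology

section SingleCrossing

lemma monotoneOn_sInf_div {F G : ℝ → ℝ} {s : Set ℝ} (hs : s ⊆ Ioi 0)
    (hbdd : ∀ x ∈ s, BddBelow {z | F x ≤ G z}) (hne : ∀ x ∈ s, {z | F x ≤ G z}.Nonempty)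
    (hcross : ∀ x ∈ s, ∀ y ∈ s, x ≤ y → ∀ c, F y ≤ G (c * y) → F x ≤ G (c * x)) :
    MonotoneOn (fun x => sInf {z | F x ≤ G z} / x) s := by
  intro x hx y hy hxy
  have hx0 : 0 < x := hs hx
  have hy0 : 0 < y := hs hy
  refine (le_div_iff₀ hy0).2 (le_csInf (hne y hy) fun w hw => ?_)
  have hmem : F x ≤ G (w / y * x) :=
    hcross x hx y hy hxy (w / y) (by rwa [div_mul_cancel₀ w hy0.ne'])
  have hle : sInf {z | F x ≤ G z} / x ≤ w / y :=
    (div_le_iff₀ hx0).2 (csInf_le (hbdd x hx) hmem)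
  exact (le_div_iff₀ hy0).1 hle

lemma quasiconcaveOn_of_hasDerivAt_mul {D : Set ℝ} (hD : Convex ℝ D) {f w l : ℝ → ℝ}
    (hf : ∀ x ∈ D, HasDerivAt f (w x * l x) x) (hw : ∀ x ∈ D, 0 ≤ w x) (hl : AntitoneOn l D) :
    QuasiconcaveOn ℝ D f := by
  refine fun r => convex_iff_ordConnected.2 ⟨fun x hx z hz m hm => ?_⟩
  have hmD : m ∈ D := hD.ordConnected.out hx.1 hz.1 hm
  refine ⟨hmD, ?_⟩
  rcases le_total 0 (l m) with hlm | hlm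
  · have hsub : Icc x m ⊆ D := hD.ordConnected.out hx.1 hmD
    have hmono : MonotoneOn f (Icc x m) := by
      refine monotoneOn_of_hasDerivWithinAt_nonneg (convex_Icc x m)
        (fun t ht => (hf t (hsub ht)).continuousAt.continuousWithinAt)
        (fun t ht => (hf t (hsub (interior_subset ht))).hasDerivWithinAt) fun t ht => ?_
      have ht := interior_subset ht
      exact mul_nonneg (hw t (hsub ht)) (hlm.trans (hl (hsub ht) hmD ht.2))
    exact hx.2.trans (hmono (left_mem_Icc.2 hm.1) (right_mem_Icc.2 hm.1) hm.1)
  · have hsub : Icc m z ⊆ D := hD.ordConnected.out hmD hz.1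
    have hanti : AntitoneOn f (Icc m z) := by
      refine antitoneOn_of_hasDerivWithinAt_nonpos (convex_Icc m z)
        (fun t ht => (hf t (hsub ht)).continuousAt.continuousWithinAt)
        (fun t ht => (hf t (hsub (interior_subset ht))).hasDerivWithinAt) fun t ht => ?_
      have ht := interior_subset ht
      exact mul_nonpos_of_nonneg_of_nonpos (hw t (hsub ht)) ((hl hmD (hsub ht) ht.1).trans hlm)
    exact hz.2.trans (hanti (left_mem_Icc.2 hm.2) (right_mem_Icc.2 hm.2) hm.2)

lemma smul_setIntegral_Iic_comp_mul_left {E : Type*} [NormedAddCommGroup E] [NormedSpace ℝ E]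
    (g : ℝ → E) (x : ℝ) {c : ℝ} (hc : 0 < c) :
    c • ∫ t in Iic x, g (c * t) = ∫ t in Iic (c * x), g t := by
  have hsmul := Measure.setIntegral_comp_smul_of_pos volume g (Iic x) hc
  simp only [smul_eq_mul, Module.finrank_self, pow_one, LinearOrderedField.smul_Iic hc] at hsmul
  rw [hsmul, smul_inv_smul₀ hc.ne']

variable {μ : Measure ℝ} {d : ℝ → ℝ} {a x y : ℝ}

lemma exists_pos_of_setIntegral_Iic_lt (hd : Integrable d μ) (hxy : x ≤ y)
    (h : ∫ t in Iic x, d t ∂μ < ∫ t in Iic y, d t ∂μ) : ∃ t ∈ Ioc x y, 0 < d t := by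
  by_contra! hneg
  have hle : ∫ t in Ioc x y, d t ∂μ ≤ 0 := setIntegral_nonpos measurableSet_Ioc hneg
  rw [← intervalIntegral.integral_of_le hxy,
    ← intervalIntegral.integral_Iic_sub_Iic hd.integrableOn hd.integrableOn] at hle
  linarith

lemma exists_neg_of_setIntegral_Iic_lt (hd : Integrable d μ) (hxy : x ≤ y)
    (h : ∫ t in Iic y, d t ∂μ < ∫ t in Iic x, d t ∂μ) : ∃ t ∈ Ioc x y, d t < 0 := by
  obtain ⟨t, ht, hpos⟩ := exists_pos_of_setIntegral_Iic_lt hd.neg hxy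
    (by simpa only [Pi.neg_apply, integral_neg, neg_lt_neg_iff] using h)
  exact ⟨t, ht, neg_pos.1 hpos⟩

lemma exists_nonneg_of_setIntegral_Iic_le_integral [μ.IsOpenPosMeasure] (hd : Integrable d μ)
    (h : ∫ t in Iic y, d t ∂μ ≤ ∫ t, d t ∂μ) : ∃ t ∈ Ioi y, 0 ≤ d t := by
  by_contra! hneg
  have hsupp : Ioi y ⊆ Function.support (-d) ∩ Ioi y :=
    fun t ht => ⟨neg_ne_zero.2 (hneg t ht).ne, ht⟩
  have hpos : 0 < ∫ t in Ioi y, (-d) t ∂μ :=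
    (setIntegral_pos_iff_support_of_nonneg_ae
      (ae_restrict_of_forall_mem measurableSet_Ioi fun t ht => (neg_pos.2 (hneg t ht)).le)
      hd.neg.integrableOn).2
      ((isOpen_Ioi.measure_pos μ nonempty_Ioi).trans_le (measure_mono hsupp))
  simp only [Pi.neg_apply, integral_neg] at hpos
  linarith [intervalIntegral.integral_Iic_add_Ioi hd.integrableOn (hd.integrableOn (s := Ioi y))]

lemma setIntegral_Iic_nonneg_of_neg_right [μ.IsOpenPosMeasure] (hd : Integrable d μ)
    (hmass : 0 ≤ ∫ t, d t ∂μ) (ha : 0 ≤ ∫ t in Iic a, d t ∂μ)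
    (hneg : ∀ p q, a < p → p ≤ q → d p < 0 → d q < 0) (hax : a ≤ x) :
    0 ≤ ∫ t in Iic x, d t ∂μ := by
  by_contra! hx
  obtain ⟨p, hp, hdp⟩ := exists_neg_of_setIntegral_Iic_lt hd hax (hx.trans_le ha)
  obtain ⟨q, hq, hdq⟩ := exists_nonneg_of_setIntegral_Iic_le_integral hd (hx.le.trans hmass)
  exact hdq.not_gt (hneg p q hp.1 (hp.2.trans (le_of_lt hq)) hdp)

lemma setIntegral_Iic_nonpos_of_ordConnected [μ.IsOpenPosMeasure] (hd : Integrable d μ)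
    (hmass : 0 ≤ ∫ t, d t ∂μ) (ha : ∫ t in Iic a, d t ∂μ ≤ 0)
    (hconn : {t ∈ Ioi a | 0 ≤ d t}.OrdConnected) (hax : a ≤ x) (hxy : x ≤ y)
    (hy : ∫ t in Iic y, d t ∂μ ≤ 0) :
    ∫ t in Iic x, d t ∂μ ≤ 0 := by
  by_contra! hx
  obtain ⟨r, hr, hdr⟩ := exists_pos_of_setIntegral_Iic_lt hd hax (ha.trans_lt hx)
  obtain ⟨p, hp, hdp⟩ := exists_neg_of_setIntegral_Iic_lt hd hxy (hy.trans_lt hx)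
  obtain ⟨q, hq, hdq⟩ := exists_nonneg_of_setIntegral_Iic_le_integral hd (hy.trans hmass)
  have hpq : p < q := hp.2.trans_lt hq
  have haq : a < q := ((hax.trans_lt hp.1).trans hpq)
  exact hdp.not_ge (hconn.out ⟨hr.1, hdr.le⟩ ⟨haq, hdq⟩ ⟨hr.2.trans hp.1.le, hpq.le⟩).2

end SingleCrossing

section BetaDensity

open ProbabilityTheory

variable {α β : ℝ}

lemma betaPDFReal_nonneg_s13 (hα : 0 < α) (hβ : 0 < β) (x : ℝ) : 0 ≤ betaPDFReal α β x := by
  by_cases hx : 0 < x ∧ x < 1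
  · exact (betaPDFReal_pos hx.1 hx.2 hα hβ).le
  · rw [betaPDFReal, if_neg hx]

lemma integrable_betaPDFReal (hα : 0 < α) (hβ : 0 < β) : Integrable (betaPDFReal α β) := by
  refine (lintegral_ofReal_ne_top_iff_integrable
    (measurable_betaPDFReal α β).aestronglyMeasurable
    (ae_of_all _ (betaPDFReal_nonneg_s13 hα hβ))).1 ?_
  exact (lintegral_betaPDF_eq_one hα hβ).trans_ne ENNReal.one_ne_top

lemma integral_betaPDFReal (hα : 0 < α) (hβ : 0 < β) : ∫ x, betaPDFReal α β x = 1 := by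
  rw [integral_eq_lintegral_of_nonneg_ae (ae_of_all _ (betaPDFReal_nonneg_s13 hα hβ))
    (measurable_betaPDFReal α β).aestronglyMeasurable]
  exact (congrArg ENNReal.toReal (lintegral_betaPDF_eq_one hα hβ)).trans ENNReal.toReal_one

end BetaDensity

section Density

open ProbabilityTheory

variable {α t : ℝ}

lemma alphaHatPDF_of_one_lt (α : ℝ) (ht : 1 < t) :
    alphaHatPDF α t
      = 1 / beta (1 / 2) α * t ^ (-(3 / 2) : ℝ) * (1 - 1 / t) ^ (α - 1) :=
  indicator_of_mem (mem_Ioi.2 ht) _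

lemma alphaHatPDF_of_le_one (α : ℝ) (ht : t ≤ 1) : alphaHatPDF α t = 0 :=
  indicator_of_notMem (notMem_Ioi.2 ht) _

lemma alphaHatPDF_pos (hα : 0 < α) (ht : 1 < t) : 0 < alphaHatPDF α t := by
  have ht0 : 0 < t := one_pos.trans ht
  have hbase : 0 < 1 - 1 / t := sub_pos.2 ((div_lt_one ht0).2 ht)
  have hbeta : 0 < beta (1 / 2) α := beta_pos (by norm_num) hα
  rw [alphaHatPDF_of_one_lt α ht]
  positivity

/-- The change of variables `u = 1 / t`, written with real powers to match
`integral_comp_rpow_Ioi`. -/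
lemma rpow_smul_betaPDFReal_rpow (α : ℝ) (ht : 0 < t) :
    (|(-1 : ℝ)| * t ^ ((-1 : ℝ) - 1)) • betaPDFReal (1 / 2) α (t ^ (-1 : ℝ))
      = alphaHatPDF α t := by
  rw [Real.rpow_neg_one]
  rcases lt_or_ge 1 t with h | h
  · have hpow : t ^ (-(3 / 2) : ℝ) = t ^ ((-1 : ℝ) - 1) * t⁻¹ ^ ((1 / 2 : ℝ) - 1) := by
      rw [Real.inv_rpow ht.le, ← Real.rpow_neg ht.le, ← Real.rpow_add ht]
      norm_num
    rw [betaPDFReal, if_pos ⟨inv_pos.2 ht, inv_lt_one_of_one_lt₀ h⟩, alphaHatPDF_of_one_lt α h,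
      hpow, one_div t, abs_neg, abs_one, smul_eq_mul]
    ring
  · rw [betaPDFReal, if_neg fun hlt => hlt.2.not_ge ((one_le_inv₀ ht).2 h),
      alphaHatPDF_of_le_one α h, smul_zero]

lemma integrable_alphaHatPDF (hα : 0 < α) : Integrable (alphaHatPDF α) := by
  have hbeta : IntegrableOn (betaPDFReal (1 / 2) α) (Ioi 0) :=
    (integrable_betaPDFReal (by norm_num) hα).integrableOn
  have hIoi : IntegrableOn (alphaHatPDF α) (Ioi 0) :=
    ((integrableOn_Ioi_comp_rpow_iff _ (p := -1) (by norm_num)).2 hbeta).congr_fun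
      (fun t ht => rpow_smul_betaPDFReal_rpow α ht) measurableSet_Ioi
  refine (integrableOn_iff_integrable_of_support_subset fun t ht => ?_).1 hIoi
  by_contra h
  exact ht (alphaHatPDF_of_le_one α ((notMem_Ioi.1 h).trans zero_le_one))

lemma integral_alphaHatPDF (hα : 0 < α) : ∫ t, alphaHatPDF α t = 1 := by
  calc ∫ t, alphaHatPDF α t
      = ∫ t in Ioi 0, alphaHatPDF α t :=
        (setIntegral_eq_integral_of_forall_compl_eq_zero fun t ht =>
          alphaHatPDF_of_le_one α ((notMem_Ioi.1 ht).trans zero_le_one)).symm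
    _ = ∫ u in Ioi 0, betaPDFReal (1 / 2) α u := by
        rw [← integral_comp_rpow_Ioi (betaPDFReal (1 / 2) α) (p := -1) (by norm_num)]
        exact setIntegral_congr_fun measurableSet_Ioi
          fun t ht => (rpow_smul_betaPDFReal_rpow α ht).symm
    _ = ∫ u, betaPDFReal (1 / 2) α u :=
        setIntegral_eq_integral_of_forall_compl_eq_zero fun u hu => if_neg fun h => hu h.1
    _ = 1 := integral_betaPDFReal (by norm_num) hα

lemma log_alphaHatPDF (hα : 0 < α) (ht : 1 < t) :
    Real.log (alphaHatPDF α t)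
      = Real.log (1 / beta (1 / 2) α) - (α + 1 / 2) * Real.log t
        + (α - 1) * Real.log (t - 1) := by
  have ht0 : 0 < t := one_pos.trans ht
  have ht1 : 0 < t - 1 := sub_pos.2 ht
  have hbeta : 0 < beta (1 / 2) α := beta_pos (by norm_num) hα
  have hbase : 1 - 1 / t = (t - 1) / t := by field_simp
  rw [alphaHatPDF_of_one_lt α ht, hbase, Real.log_mul (by positivity) (by positivity),
    Real.log_mul (by positivity) (by positivity), Real.log_rpow ht0,
    Real.log_rpow (by positivity), Real.log_div ht1.ne' ht0.ne']
  ring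

lemma hasDerivAt_log_alphaHatPDF (hα : 0 < α) (ht : 1 < t) :
    HasDerivAt (fun t => Real.log (alphaHatPDF α t))
      ((α - 1) / (t - 1) - (α + 1 / 2) / t) t := by
  have hlog : HasDerivAt (fun t : ℝ => (α + 1 / 2) * Real.log t) ((α + 1 / 2) * t⁻¹) t :=
    (Real.hasDerivAt_log (one_pos.trans ht).ne').const_mul _
  have hlog' : HasDerivAt (fun t : ℝ => (α - 1) * Real.log (t - 1)) ((α - 1) * (1 / (t - 1))) t :=
    (((hasDerivAt_id t).sub_const 1).log (sub_pos.2 ht).ne').const_mul _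
  have hsum := (hlog.const_sub (Real.log (1 / beta (1 / 2) α))).add hlog'
  refine (hsum.congr_of_eventuallyEq ?_).congr_deriv ?_
  · filter_upwards [lt_mem_nhds ht] with u hu using log_alphaHatPDF hα hu
  · ring

end Density

section DistributionFunction

variable {α x y u : ℝ}

lemma alphaHatCDF_of_le_one (α : ℝ) (hx : x ≤ 1) : alphaHatCDF α x = 0 :=
  setIntegral_eq_zero_of_forall_eq_zero fun _ ht => alphaHatPDF_of_le_one α (le_trans ht hx)

lemma alphaHatCDF_strictMonoOn (hα : 0 < α) : StrictMonoOn (alphaHatCDF α) (Ici 1) := by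
  intro x hx y _ hxy
  have hf := integrable_alphaHatPDF hα
  rw [← sub_pos, alphaHatCDF, alphaHatCDF,
    intervalIntegral.integral_Iic_sub_Iic hf.integrableOn hf.integrableOn]
  exact intervalIntegral.intervalIntegral_pos_of_pos_on hf.intervalIntegrable
    (fun t ht => alphaHatPDF_pos hα (lt_of_le_of_lt hx ht.1)) hxy

lemma alphaHatCDF_pos (hα : 0 < α) (hx : 1 < x) : 0 < alphaHatCDF α x :=
  (alphaHatCDF_of_le_one α le_rfl).symm.trans_lt
    (alphaHatCDF_strictMonoOn hα self_mem_Ici hx.le hx)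

lemma alphaHatCDF_nonneg (hα : 0 < α) (x : ℝ) : 0 ≤ alphaHatCDF α x := by
  rcases le_or_gt x 1 with hx | hx
  · exact (alphaHatCDF_of_le_one α hx).ge
  · exact (alphaHatCDF_pos hα hx).le

lemma alphaHatCDF_lt_alphaHatCDF (hα : 0 < α) (hy : 1 < y) (hxy : x < y) :
    alphaHatCDF α x < alphaHatCDF α y := by
  rcases le_total x 1 with hx | hx
  · exact (alphaHatCDF_of_le_one α hx).trans_lt (alphaHatCDF_pos hα hy)
  · exact alphaHatCDF_strictMonoOn hα hx hy.le hxy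

lemma tendsto_alphaHatCDF (hα : 0 < α) : Tendsto (alphaHatCDF α) atTop (𝓝 1) := by
  rw [← integral_alphaHatPDF hα]
  exact (aecover_Iic tendsto_id).integral_tendsto_of_countably_generated (integrable_alphaHatPDF hα)

lemma alphaHatCDF_lt_one (hα : 0 < α) (hx : 1 < x) : alphaHatCDF α x < 1 := by
  have hx' : 1 < x + 1 := by linarith
  have hlt : alphaHatCDF α x < alphaHatCDF α (x + 1) :=
    alphaHatCDF_lt_alphaHatCDF hα hx' (lt_add_one x)
  refine hlt.trans_le (ge_of_tendsto (tendsto_alphaHatCDF hα) ?_)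
  filter_upwards [eventually_gt_atTop (x + 1)] with y hy
  exact (alphaHatCDF_lt_alphaHatCDF hα (hx'.trans hy) hy).le

lemma bddBelow_setOf_le_alphaHatCDF (α : ℝ) (hu : 0 < u) :
    BddBelow {z | u ≤ alphaHatCDF α z} := by
  refine ⟨1, fun z hz => ?_⟩
  by_contra! hz1
  exact hu.not_ge (hz.trans_eq (alphaHatCDF_of_le_one α hz1.le))

lemma nonempty_setOf_le_alphaHatCDF (hα : 0 < α) (hu : u < 1) :
    {z | u ≤ alphaHatCDF α z}.Nonempty :=
  ((tendsto_alphaHatCDF hα).eventually (le_mem_nhds hu)).exists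

end DistributionFunction

section Comparison

variable {a b c t x y : ℝ}

lemma integrable_mul_alphaHatPDF_mul (hb : 0 < b) (hc : 0 < c) :
    Integrable fun t => c * alphaHatPDF b (c * t) :=
  ((integrable_alphaHatPDF hb).comp_mul_left' hc.ne').const_mul c

/-- The density of `t ↦ F(t) - G(ct)`, where `F` and `G` are the distribution functions of `α̂` for
the shapes `a` and `b`. -/
noncomputable def alphaHatGap (a b c t : ℝ) : ℝ :=
  alphaHatPDF a t - c * alphaHatPDF b (c * t)

lemma integrable_alphaHatGap (ha : 0 < a) (hb : 0 < b) (hc : 0 < c) :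
    Integrable (alphaHatGap a b c) :=
  (integrable_alphaHatPDF ha).sub (integrable_mul_alphaHatPDF_mul hb hc)

lemma setIntegral_Iic_alphaHatGap (ha : 0 < a) (hb : 0 < b) (hc : 0 < c) (x : ℝ) :
    ∫ t in Iic x, alphaHatGap a b c t = alphaHatCDF a x - alphaHatCDF b (c * x) := by
  simp only [alphaHatGap]
  rw [integral_sub (integrable_alphaHatPDF ha).integrableOn
      (integrable_mul_alphaHatPDF_mul hb hc).integrableOn,
    integral_const_mul, ← smul_eq_mul, smul_setIntegral_Iic_comp_mul_left _ _ hc, alphaHatCDF,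
    alphaHatCDF]

lemma integral_alphaHatGap (ha : 0 < a) (hb : 0 < b) (hc : 0 < c) :
    ∫ t, alphaHatGap a b c t = 0 := by
  simp only [alphaHatGap]
  rw [integral_sub (integrable_alphaHatPDF ha)
      (integrable_mul_alphaHatPDF_mul hb hc),
    integral_const_mul, Measure.integral_comp_mul_left, integral_alphaHatPDF ha,
    integral_alphaHatPDF hb, abs_of_pos (inv_pos.2 hc), smul_eq_mul, mul_one,
    mul_inv_cancel₀ hc.ne', sub_self]

/-- The log-likelihood ratio between `α̂` for the shape `a` and the rescaling by `1 / c` of `α̂` for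
the shape `b`, without the Jacobian term `-log c`. -/
noncomputable def alphaHatLogRatio (a b c t : ℝ) : ℝ :=
  Real.log (alphaHatPDF a t) - Real.log (alphaHatPDF b (c * t))

lemma alphaHatGap_nonneg_iff (ha : 0 < a) (hb : 0 < b) (hc : 1 ≤ c) (ht : 1 < t) :
    0 ≤ alphaHatGap a b c t ↔ Real.log c ≤ alphaHatLogRatio a b c t := by
  have hc0 : 0 < c := one_pos.trans_le hc
  have hg : 0 < alphaHatPDF b (c * t) := alphaHatPDF_pos hb (one_lt_mul_of_le_of_lt hc ht)
  rw [alphaHatGap, alphaHatLogRatio, sub_nonneg, le_sub_iff_add_le,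
    ← Real.log_mul hc0.ne' hg.ne', Real.log_le_log_iff (mul_pos hc0 hg) (alphaHatPDF_pos ha ht)]

lemma hasDerivAt_alphaHatLogRatio (ha : 0 < a) (hb : 0 < b) (hc : 1 ≤ c) (ht : 1 < t) :
    HasDerivAt (alphaHatLogRatio a b c)
      (1 / ((t - 1) * (c * t - 1)) * ((a - 1) * c - (b - 1) + (b - a) / t)) t := by
  have hct : 1 < c * t := one_lt_mul_of_le_of_lt hc ht
  have ht0 : t ≠ 0 := (one_pos.trans ht).ne'
  have ht1 : t - 1 ≠ 0 := (sub_pos.2 ht).ne'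
  have hct1 : t * c - 1 ≠ 0 := by rw [mul_comm]; exact (sub_pos.2 hct).ne'
  have hc0 : c ≠ 0 := (one_pos.trans_le hc).ne'
  have hscaled : HasDerivAt (fun t => Real.log (alphaHatPDF b (c * t)))
      (((b - 1) / (c * t - 1) - (b + 1 / 2) / (c * t)) * (c * 1)) t :=
    (hasDerivAt_log_alphaHatPDF hb hct).comp t ((hasDerivAt_id t).const_mul c)
  refine ((hasDerivAt_log_alphaHatPDF ha ht).sub hscaled).congr_deriv ?_
  field_simp
  ring

lemma quasiconcaveOn_alphaHatLogRatio (ha : 0 < a) (hab : a ≤ b) (hc : 1 ≤ c) :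
    QuasiconcaveOn ℝ (Ioi 1) (alphaHatLogRatio a b c) := by
  refine quasiconcaveOn_of_hasDerivAt_mul (convex_Ioi 1)
    (fun t ht => hasDerivAt_alphaHatLogRatio ha (ha.trans_le hab) hc ht) (fun t ht => ?_)
    fun s hs t _ hst => ?_
  · have hct : 1 < c * t := one_lt_mul_of_le_of_lt hc ht
    exact one_div_nonneg.2 (mul_pos (sub_pos.2 ht) (sub_pos.2 hct)).le
  · have hs0 : 0 < s := one_pos.trans hs
    exact add_le_add_right (div_le_div_of_nonneg_left (sub_nonneg.2 hab) hs0 hst) _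

lemma ordConnected_setOf_alphaHatGap_nonneg (ha : 0 < a) (hab : a ≤ b) (hc : 1 ≤ c) :
    {t ∈ Ioi 1 | 0 ≤ alphaHatGap a b c t}.OrdConnected := by
  have hset : {t ∈ Ioi 1 | 0 ≤ alphaHatGap a b c t}
      = {t ∈ Ioi 1 | Real.log c ≤ alphaHatLogRatio a b c t} :=
    sep_ext_iff.2 fun _ ht => alphaHatGap_nonneg_iff ha (ha.trans_le hab) hc ht
  rw [hset]
  exact (quasiconcaveOn_alphaHatLogRatio ha hab hc (Real.log c)).ordConnected

lemma antitoneOn_alphaHatLogRatio_one (ha : 0 < a) (hab : a ≤ b) :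
    AntitoneOn (alphaHatLogRatio a b 1) (Ioi 1) := by
  have hderiv (t : ℝ) (ht : 1 < t) := hasDerivAt_alphaHatLogRatio ha (ha.trans_le hab) le_rfl ht
  refine antitoneOn_of_hasDerivWithinAt_nonpos (convex_Ioi 1)
    (fun t ht => (hderiv t ht).continuousAt.continuousWithinAt)
    (fun t ht => (hderiv t (interior_subset ht)).hasDerivWithinAt) fun t ht => ?_
  have ht1 : 1 < t := interior_subset ht
  have hle : (b - a) / t ≤ b - a := div_le_self (sub_nonneg.2 hab) ht1.le
  refine mul_nonpos_of_nonneg_of_nonpos (one_div_nonneg.2 ?_) (by linarith)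
  rw [one_mul]
  exact mul_self_nonneg _

lemma alphaHatCDF_le_alphaHatCDF_of_shape_le (ha : 0 < a) (hab : a ≤ b) (hx : 1 ≤ x) :
    alphaHatCDF b x ≤ alphaHatCDF a x := by
  have hb : 0 < b := ha.trans_le hab
  have hgap (x : ℝ) : ∫ t in Iic x, alphaHatGap a b 1 t = alphaHatCDF a x - alphaHatCDF b x := by
    rw [setIntegral_Iic_alphaHatGap ha hb one_pos, one_mul]
  rw [← sub_nonneg, ← hgap]
  refine setIntegral_Iic_nonneg_of_neg_right (integrable_alphaHatGap ha hb one_pos)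
    (integral_alphaHatGap ha hb one_pos).ge ?_ (fun p q hp hpq hneg => ?_) hx
  · rw [hgap, alphaHatCDF_of_le_one a le_rfl, alphaHatCDF_of_le_one b le_rfl, sub_zero]
  · have hq : 1 < q := hp.trans_le hpq
    rw [← not_le, alphaHatGap_nonneg_iff ha hb le_rfl hp, not_le] at hneg
    rw [← not_le, alphaHatGap_nonneg_iff ha hb le_rfl hq, not_le]
    exact (antitoneOn_alphaHatLogRatio_one ha hab hp hq hpq).trans_lt hneg

lemma alphaHatCDF_le_alphaHatCDF_mul_of_le (ha : 0 < a) (hab : a ≤ b) (hc : 1 ≤ c) (hx : 1 ≤ x)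
    (hxy : x ≤ y) (h : alphaHatCDF a y ≤ alphaHatCDF b (c * y)) :
    alphaHatCDF a x ≤ alphaHatCDF b (c * x) := by
  have hb : 0 < b := ha.trans_le hab
  have hc0 : 0 < c := one_pos.trans_le hc
  have hgap := setIntegral_Iic_alphaHatGap ha hb hc0
  have hone : ∫ t in Iic 1, alphaHatGap a b c t ≤ 0 := by
    rw [hgap, alphaHatCDF_of_le_one a le_rfl, zero_sub, neg_nonpos]
    exact alphaHatCDF_nonneg hb _
  rw [← sub_nonpos, ← hgap] at h ⊢
  exact setIntegral_Iic_nonpos_of_ordConnected (integrable_alphaHatGap ha hb hc0)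
    (integral_alphaHatGap ha hb hc0).ge hone
    (ordConnected_setOf_alphaHatGap_nonneg ha hab hc) hx hxy h

lemma one_le_of_alphaHatCDF_le_alphaHatCDF_mul (ha : 0 < a) (hab : a ≤ b) (hy : 1 < y)
    (h : alphaHatCDF a y ≤ alphaHatCDF b (c * y)) : 1 ≤ c := by
  by_contra! hc
  have hlt : alphaHatCDF b (c * y) < alphaHatCDF b y :=
    alphaHatCDF_lt_alphaHatCDF (ha.trans_le hab) hy (mul_lt_of_lt_one_left (one_pos.trans hy) hc)
  exact (hlt.trans_le (alphaHatCDF_le_alphaHatCDF_of_shape_le ha hab hy.le)).not_ge h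

end Comparison

/-- For `n = 2`, the moment estimator `α̂` is increasing in the shape
parameter `α` with respect to the star order: for `0 < α₁ < α₂`, `α̂₁ ≤_* α̂₂`, that is,
the function `x ↦ G⁻¹(F(x))/x` is increasing on the support `(1, ∞)` of `α̂₁`. -/
theorem momentEstimator_star_increasing_two
    (α₁ α₂ : ℝ) (hα₁ : 0 < α₁) (hα : α₁ < α₂) :
    MonotoneOn (fun x => alphaHatQuantile α₂ (alphaHatCDF α₁ x) / x)
      (Set.Ioi (1 : ℝ)) := by
  refine monotoneOn_sInf_div (Ioi_subset_Ioi zero_le_one)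
    (fun x hx => bddBelow_setOf_le_alphaHatCDF α₂ (alphaHatCDF_pos hα₁ hx))
    (fun x hx => nonempty_setOf_le_alphaHatCDF (hα₁.trans hα) (alphaHatCDF_lt_one hα₁ hx))
    fun x hx y hy hxy c h => ?_
  have hc : 1 ≤ c := one_le_of_alphaHatCDF_le_alphaHatCDF_mul hα₁ hα.le hy h
  exact alphaHatCDF_le_alphaHatCDF_mul_of_le hα₁ hα.le hc (le_of_lt hx) hxy h
end
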